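/- arXiv:2601.16585 — 4 statements merged into one kernel-verified Lean document; each statement's English description precedes it below -/
import Mathlib

section
/- (Supplementary Lemma 1.) Suppose (B1)–(B4) hold and C_n/p_n → ∞. Then the generic elliptical credible region S = {β : (β − β̂_n)^⊤ Σ^{-1} (β − β̂_n) ≤ C_n} contains the true parameter β⁰_n with probability approaching 1, i.e. P{(β̂_n − β⁰_n)^⊤ Σ^{-1} (β̂_n − β⁰_n) ≤ C_n} → 1 as n → ∞. -/
open MeasureTheory ProbabilityTheory Matrix Filter Asymptotics

noncomputable section

/-- Euclidean norm of a finite real vector. -/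
def enorm2 {ι : Type*} [Fintype ι] (v : ι → ℝ) : ℝ := Real.sqrt (∑ i, v i ^ 2)

/-- `A_n = O_p(B_n)`: for every `γ > 0` there are `ζ_γ > 0` and `N_γ` with
`P(|A_n| > ζ_γ B_n) < γ` for all `n ≥ N_γ`. -/
def IsBigOP {Ω : ℕ → Type*} [∀ n, MeasurableSpace (Ω n)]
    (P : (n : ℕ) → Measure (Ω n)) (A : (n : ℕ) → Ω n → ℝ) (B : ℕ → ℝ) : Prop :=
  ∀ γ : ℝ, 0 < γ → ∃ ζ : ℝ, 0 < ζ ∧ ∃ N : ℕ, ∀ n, N ≤ n →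
    ((P n) {ω | ζ * B n < |A n ω|}).toReal < γ

/-- `A_n = Ω_p(B_n)`: there exist `ζ, γ > 0` and `N` with
`P(|A_n| ≥ ζ B_n) ≥ γ` for all `n ≥ N`. -/
def IsOmegaP {Ω : ℕ → Type*} [∀ n, MeasurableSpace (Ω n)]
    (P : (n : ℕ) → Measure (Ω n)) (A : (n : ℕ) → Ω n → ℝ) (B : ℕ → ℝ) : Prop :=
  ∃ ζ γ : ℝ, 0 < ζ ∧ 0 < γ ∧ ∃ N : ℕ, ∀ n, N ≤ n →
    γ ≤ ((P n) {ω | ζ * B n ≤ |A n ω|}).toReal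

/-- `A_n ≍ B_n`: both `O_p` and `Ω_p`. -/
def IsThetaP {Ω : ℕ → Type*} [∀ n, MeasurableSpace (Ω n)]
    (P : (n : ℕ) → Measure (Ω n)) (A : (n : ℕ) → Ω n → ℝ) (B : ℕ → ℝ) : Prop :=
  IsBigOP P A B ∧ IsOmegaP P A B

/-- `A_n = o_p(B_n)`: `P(|A_n| ≥ γ B_n) → 0` for every `γ > 0`. -/
def IsLittleOP {Ω : ℕ → Type*} [∀ n, MeasurableSpace (Ω n)]
    (P : (n : ℕ) → Measure (Ω n)) (A : (n : ℕ) → Ω n → ℝ) (B : ℕ → ℝ) : Prop :=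
  ∀ γ : ℝ, 0 < γ →
    Tendsto (fun n => ((P n) {ω | γ * B n ≤ |A n ω|}).toReal) atTop (nhds 0)

/-- Convergence in probability to a constant `c`. -/
def TendstoInP {Ω : ℕ → Type*} [∀ n, MeasurableSpace (Ω n)]
    (P : (n : ℕ) → Measure (Ω n)) (A : (n : ℕ) → Ω n → ℝ) (c : ℝ) : Prop :=
  ∀ γ : ℝ, 0 < γ →
    Tendsto (fun n => ((P n) {ω | γ ≤ |A n ω - c|}).toReal) atTop (nhds 0)

/-- `Z` has (under `P`) the multivariate Gaussian distribution with mean vector `m` and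
covariance matrix `V`, characterized through one-dimensional projections. -/
def IsMvGaussian {Ω : Type*} [MeasurableSpace Ω] (P : Measure Ω)
    {ι : Type*} [Fintype ι] (Z : Ω → ι → ℝ) (m : ι → ℝ) (V : Matrix ι ι ℝ) : Prop :=
  ∀ a : ι → ℝ,
    Measure.map (fun ω => ∑ i, a i * Z ω i) P
      = gaussianReal (∑ i, a i * m i) (Real.toNNReal (a ⬝ᵥ (V *ᵥ a)))

end


lemma enorm2_sq_aux {ι : Type*} [Fintype ι] (v : ι → ℝ) : enorm2 v ^ 2 = ∑ i, v i ^ 2 := by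
  unfold enorm2
  exact Real.sq_sqrt (Finset.sum_nonneg fun i _ => sq_nonneg _)

lemma isUnit_det_aux {ι : Type*} [Fintype ι] [DecidableEq ι] (M : Matrix ι ι ℝ) (c : ℝ)
    (hc : 0 < c) (hM : ∀ v : ι → ℝ, c * ∑ i, v i ^ 2 ≤ v ⬝ᵥ (M *ᵥ v)) : IsUnit M.det := by
  rw [isUnit_iff_ne_zero]
  intro h
  obtain ⟨v, hv, hv0⟩ := Matrix.exists_mulVec_eq_zero_iff.mpr h
  have h1 := hM v
  rw [hv0, dotProduct_zero] at h1
  have h2 : 0 ≤ ∑ i, v i ^ 2 := Finset.sum_nonneg fun i _ => sq_nonneg _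
  have h3 : ∑ i, v i ^ 2 = 0 := by nlinarith
  rw [Finset.sum_eq_zero_iff_of_nonneg (fun i _ => sq_nonneg _)] at h3
  apply hv
  ext i
  simpa using h3 i (Finset.mem_univ i)

lemma quad_aux {ι : Type*} [Fintype ι] (M : Matrix ι ι ℝ) (c : ℝ)
    (hc : 0 < c) (hM : ∀ v : ι → ℝ, c * ∑ i, v i ^ 2 ≤ v ⬝ᵥ (M *ᵥ v)) (d : ι → ℝ) :
    c * (d ⬝ᵥ (M *ᵥ d)) ≤ ∑ i, (M *ᵥ d) i ^ 2 := by
  have h1 := hM d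
  generalize M *ᵥ d = w at *
  have h2 : 0 ≤ ∑ i, (w i - c * d i) ^ 2 := Finset.sum_nonneg fun i _ => sq_nonneg _
  have h3 : ∑ i, (w i - c * d i) ^ 2
      = ∑ i, w i ^ 2 - 2 * c * (d ⬝ᵥ w) + c ^ 2 * ∑ i, d i ^ 2 := by
    simp only [dotProduct, Finset.mul_sum, ← Finset.sum_sub_distrib, ← Finset.sum_add_distrib]
    exact Finset.sum_congr rfl fun i _ => by ring
  nlinarith

/-- Deterministic bound on the quadratic form. -/
lemma det_aux {m ι : Type*} [Fintype m] [Fintype ι] [DecidableEq ι]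
    (X : Matrix m ι ℝ) (δ : ι → ℝ) (hδ : ∀ i, 0 ≤ δ i) (c : ℝ) (hc : 0 < c)
    (hX : ∀ v : ι → ℝ, c * ∑ i, v i ^ 2 ≤ v ⬝ᵥ ((Xᵀ * X) *ᵥ v))
    (b : ι → ℝ) (e : m → ℝ) (s : ℝ) (hs : 0 < s) (d : ι → ℝ)
    (hd : d = (Xᵀ * X + Matrix.diagonal δ)⁻¹ *ᵥ (Xᵀ *ᵥ (X *ᵥ b + e)) - b) :
    d ⬝ᵥ ((s • (Xᵀ * X + Matrix.diagonal δ)⁻¹)⁻¹ *ᵥ d)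
      ≤ 2 / (s * c) * (∑ j, (∑ i, X i j * e i) ^ 2 + ∑ j, (δ j * b j) ^ 2) := by
  set M := Xᵀ * X + Matrix.diagonal δ with hMdef
  have hM : ∀ v : ι → ℝ, c * ∑ i, v i ^ 2 ≤ v ⬝ᵥ (M *ᵥ v) := by
    intro v
    rw [hMdef, Matrix.add_mulVec, dotProduct_add]
    have : 0 ≤ v ⬝ᵥ (Matrix.diagonal δ *ᵥ v) := by
      simp only [dotProduct, Matrix.mulVec_diagonal]
      exact Finset.sum_nonneg fun i _ => by nlinarith [mul_nonneg (hδ i) (sq_nonneg (v i))]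
    linarith [hX v]
  have hu := isUnit_det_aux M c hc hM
  have hinv : (s • M⁻¹)⁻¹ = s⁻¹ • M := by
    apply Matrix.inv_eq_right_inv
    rw [Matrix.smul_mul, Matrix.mul_smul, smul_smul, Matrix.nonsing_inv_mul _ hu,
      mul_inv_cancel₀ hs.ne', one_smul]
  have hw : M *ᵥ d = fun j => (∑ i, X i j * e i) - δ j * b j := by
    rw [hd, Matrix.mulVec_sub, Matrix.mulVec_mulVec, Matrix.mul_nonsing_inv _ hu,
      Matrix.one_mulVec, Matrix.mulVec_add, Matrix.mulVec_mulVec, hMdef, Matrix.add_mulVec]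
    ext j
    simp only [Pi.sub_apply, Pi.add_apply, Matrix.mulVec_diagonal]
    have : (Xᵀ *ᵥ e) j = ∑ i, X i j * e i := by
      simp [Matrix.mulVec, dotProduct]
    rw [this]; ring
  have hq := quad_aux M c hc hM d
  rw [hinv, Matrix.smul_mulVec, dotProduct_smul, smul_eq_mul]
  have h2 : ∑ i, (M *ᵥ d) i ^ 2
      ≤ 2 * (∑ j, (∑ i, X i j * e i) ^ 2 + ∑ j, (δ j * b j) ^ 2) := by
    rw [hw, ← Finset.sum_add_distrib, Finset.mul_sum]
    refine Finset.sum_le_sum fun j _ => ?_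
    nlinarith [sq_nonneg ((∑ i, X i j * e i) + δ j * b j)]
  have h3 : d ⬝ᵥ (M *ᵥ d) ≤
      2 * (∑ j, (∑ i, X i j * e i) ^ 2 + ∑ j, (δ j * b j) ^ 2) / c := by
    rw [le_div_iff₀ hc]; linarith
  calc s⁻¹ * (d ⬝ᵥ (M *ᵥ d)) ≤ s⁻¹ *
      (2 * (∑ j, (∑ i, X i j * e i) ^ 2 + ∑ j, (δ j * b j) ^ 2) / c) :=
        mul_le_mul_of_nonneg_left h3 (inv_nonneg.mpr hs.le)
    _ = _ := by field_simp

lemma lintegral_sq_gaussian_aux {Ω : Type*} [MeasurableSpace Ω] (P : Measure Ω)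
    [IsProbabilityMeasure P] (Z : Ω → ℝ) (v : NNReal)
    (h : Measure.map Z P = gaussianReal 0 v) :
    AEMeasurable Z P ∧ ∫⁻ ω, ENNReal.ofReal (Z ω ^ 2) ∂P = v := by
  have hZ : AEMeasurable Z P := by
    by_contra hn
    rw [Measure.map_of_not_aemeasurable hn] at h
    have := IsProbabilityMeasure.ne_zero (gaussianReal 0 v)
    exact this h.symm
  refine ⟨hZ, ?_⟩
  have h1 : ∫⁻ ω, ENNReal.ofReal (Z ω ^ 2) ∂P
      = ∫⁻ x, ENNReal.ofReal (x ^ 2) ∂(gaussianReal 0 v) := by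
    rw [← h, lintegral_map' (by fun_prop) hZ]
  have hm : MemLp id 2 (gaussianReal 0 v) := memLp_id_gaussianReal 2
  have hi : Integrable (fun x : ℝ => x ^ 2) (gaussianReal 0 v) := by
    simpa using hm.integrable_sq
  have hvar : ∫ x, x ^ 2 ∂(gaussianReal 0 v) = v := by
    have := variance_id_gaussianReal (μ := 0) (v := v)
    rw [variance_eq_integral (by fun_prop)] at this
    simpa using this
  rw [h1, ← ofReal_integral_eq_lintegral_ofReal hi (ae_of_all _ fun x => sq_nonneg x), hvar]
  simp

/-- Markov bound on the noise term. -/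
lemma markov_aux {Ω : Type*} [MeasurableSpace Ω] (P : Measure Ω)
    [IsProbabilityMeasure P] {ι : Type*} [Fintype ι] (Z : ι → Ω → ℝ) (v : ι → NNReal) (K : ℝ)
    (h : ∀ j, Measure.map (Z j) P = gaussianReal 0 (v j)) (hv : ∀ j, (v j : ℝ) ≤ K)
    (T : ℝ) (hT : 0 < T) :
    (P {ω | T ≤ ∑ j, Z j ω ^ 2}).toReal ≤ (Fintype.card ι * K) / T := by
  have hae : AEMeasurable (fun ω => ENNReal.ofReal (∑ j, Z j ω ^ 2)) P := by
    apply AEMeasurable.ennreal_ofReal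
    exact Finset.aemeasurable_fun_sum _ fun j _ =>
      ((lintegral_sq_gaussian_aux P (Z j) (v j) (h j)).1.pow_const 2)
  have hset : {ω | T ≤ ∑ j, Z j ω ^ 2}
      = {ω | ENNReal.ofReal T ≤ ENNReal.ofReal (∑ j, Z j ω ^ 2)} := by
    ext ω
    simp only [Set.mem_setOf_eq]
    rw [ENNReal.ofReal_le_ofReal_iff (Finset.sum_nonneg fun i _ => sq_nonneg _)]
  have hint : ∫⁻ ω, ENNReal.ofReal (∑ j, Z j ω ^ 2) ∂P = ∑ j, (v j : ENNReal) := by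
    have : ∀ ω, ENNReal.ofReal (∑ j, Z j ω ^ 2) = ∑ j, ENNReal.ofReal (Z j ω ^ 2) :=
      fun ω => ENNReal.ofReal_sum_of_nonneg fun i _ => sq_nonneg _
    simp_rw [this]
    rw [lintegral_finsetSum']
    · exact Finset.sum_congr rfl fun j _ => (lintegral_sq_gaussian_aux P (Z j) (v j) (h j)).2
    · intro j _
      exact ((lintegral_sq_gaussian_aux P (Z j) (v j) (h j)).1.pow_const 2).ennreal_ofReal
  have hmk := mul_meas_ge_le_lintegral₀ hae (ENNReal.ofReal T)
  rw [hint, ← hset] at hmk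
  have hmk2 := ENNReal.toReal_mono (by simp) hmk
  rw [ENNReal.toReal_mul, ENNReal.toReal_ofReal hT.le, ENNReal.toReal_sum (by simp)] at hmk2
  rw [le_div_iff₀ hT, mul_comm]
  refine hmk2.trans ?_
  calc ∑ j, (v j : ENNReal).toReal ≤ ∑ _j : ι, K := Finset.sum_le_sum fun j _ => by simpa using hv j
    _ = _ := by simp

lemma cov_aux (n : ℕ) (a : Fin n → ℝ) (σ2 : ℝ) (hσ : 0 < σ2) (ha : ∑ i, a i = 0) :
    a ⬝ᵥ ((σ2 • ((1 : Matrix (Fin n) (Fin n) ℝ) - ((n : ℝ))⁻¹ • Matrix.of fun _ _ => (1 : ℝ))) *ᵥ a)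
      = σ2 * ∑ i, a i ^ 2 := by
  have h0 : (Matrix.of fun (_ _ : Fin n) => (1 : ℝ)) *ᵥ a = 0 := by
    ext i
    simp [Matrix.mulVec, dotProduct, ha]
  rw [Matrix.smul_mulVec, Matrix.sub_mulVec, Matrix.smul_mulVec, h0, Matrix.one_mulVec,
    smul_zero, sub_zero, dotProduct_smul, smul_eq_mul]
  simp [dotProduct, sq]

open MeasureTheory ProbabilityTheory Matrix Filter Asymptotics in
/-- Supplementary Lemma 1: under (B1)–(B4) and `C_n/p_n → ∞`, the generic elliptical
credible region contains the true parameter with probability approaching one. -/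
theorem stmt_3
    -- probability spaces
    (Ω : ℕ → Type) [∀ n, MeasurableSpace (Ω n)]
    (P : (n : ℕ) → Measure (Ω n)) [∀ n, IsProbabilityMeasure (P n)]
    -- grouped design: group `g` has size `pg n g`; coordinates are indexed by the sigma type
    (G : ℕ → ℕ) (pg : (n : ℕ) → Fin (G n) → ℕ)
    (X : (n : ℕ) → Matrix (Fin n) ((g : Fin (G n)) × Fin (pg n g)) ℝ)
    (hXc : ∀ n j, ∑ i, X n i j = 0)
    -- true model
    (β0 : (n : ℕ) → ((g : Fin (G n)) × Fin (pg n g)) → ℝ)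
    (σ2 : ℝ) (hσ2 : 0 < σ2)
    (ε : (n : ℕ) → Ω n → Fin n → ℝ)
    (hε : ∀ n, IsMvGaussian (P n) (ε n) 0
      (σ2 • ((1 : Matrix (Fin n) (Fin n) ℝ) - ((n : ℝ))⁻¹ • Matrix.of fun _ _ => (1 : ℝ))))
    (y : (n : ℕ) → Ω n → Fin n → ℝ) (hy : ∀ n ω, y n ω = X n *ᵥ β0 n + ε n ω)
    -- (B1)
    (hB1a : (fun n => (∑ g, pg n g : ℝ)) =o[atTop] fun n => (n : ℝ))
    (hB1b : ∃ Pmax : ℝ, ∃ N : ℕ, ∀ n, N ≤ n → ∀ g, (pg n g : ℝ) ≤ Pmax)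
    -- (B2): the number of truly important predictors is `o` of the total number
    (hB2 : (fun n => ∑ g ∈ Finset.univ.filter (fun g => ∃ j, β0 n ⟨g, j⟩ ≠ 0), (pg n g : ℝ))
      =o[atTop] fun n => (∑ g, pg n g : ℝ))
    -- (B3)
    (dmin dmax : ℝ) (hdmin : 0 < dmin)
    (hB3 : ∃ N : ℕ, ∀ n, N ≤ n → ∀ v : ((g : Fin (G n)) × Fin (pg n g)) → ℝ,
      (n : ℝ) * dmin * enorm2 v ^ 2 ≤ v ⬝ᵥ (((X n)ᵀ * X n) *ᵥ v) ∧
      v ⬝ᵥ (((X n)ᵀ * X n) *ᵥ v) ≤ (n : ℝ) * dmax * enorm2 v ^ 2)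
    -- (B4)
    (hB4 : ∃ U : ℝ, ∃ N : ℕ, ∀ n, N ≤ n → ∀ g, enorm2 (fun j => β0 n ⟨g, j⟩) ≤ U)
    -- generic posterior quantities
    (δ : (n : ℕ) → Ω n → Fin (G n) → ℝ) (hδ0 : ∀ n ω g, 0 ≤ δ n ω g)
    (hδo : IsLittleOP P (fun n ω => sSup (Set.range (δ n ω))) fun n => Real.sqrt n)
    (Δ : (n : ℕ) → Ω n → Matrix ((g : Fin (G n)) × Fin (pg n g)) ((g : Fin (G n)) × Fin (pg n g)) ℝ)
    (hΔ : ∀ n ω, Δ n ω = Matrix.diagonal fun i => δ n ω i.1)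
    (βhat : (n : ℕ) → Ω n → ((g : Fin (G n)) × Fin (pg n g)) → ℝ)
    (hβhat : ∀ n ω, βhat n ω = ((X n)ᵀ * X n + Δ n ω)⁻¹ *ᵥ ((X n)ᵀ *ᵥ y n ω))
    (s' : (n : ℕ) → Ω n → ℝ) (hs' : TendstoInP P s' σ2)
    (Sg : (n : ℕ) → Ω n → Matrix ((g : Fin (G n)) × Fin (pg n g)) ((g : Fin (G n)) × Fin (pg n g)) ℝ)
    (hSg : ∀ n ω, Sg n ω = s' n ω • ((X n)ᵀ * X n + Δ n ω)⁻¹)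
    -- the radius
    (C : ℕ → ℝ) (hC : Tendsto (fun n => C n / (∑ g, pg n g : ℝ)) atTop atTop) :
    Tendsto (fun n => ((P n) {ω |
        (fun i => βhat n ω i - β0 n i) ⬝ᵥ ((Sg n ω)⁻¹ *ᵥ fun i => βhat n ω i - β0 n i)
          ≤ C n}).toReal)
      atTop (nhds 1) := by
  classical
  obtain ⟨N3, hN3⟩ := hB3
  obtain ⟨U, N4, hN4⟩ := hB4
  set p : ℕ → ℝ := fun n => (∑ g, pg n g : ℝ) with hp
  set T : ℕ → ℝ := fun n => n * (C n * σ2 * dmin / 4) - n * p n * U ^ 2 with hT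
  have hp0 : ∀ n, 0 ≤ p n := fun n => Finset.sum_nonneg fun g _ => Nat.cast_nonneg _
  have hcard : ∀ n, (Fintype.card ((g : Fin (G n)) × Fin (pg n g)) : ℝ) = p n := by
    intro n; simp [hp]
  -- the ratio
  set r : ℕ → ℝ := fun n => (C n / p n) * (σ2 * dmin / 4) - U ^ 2 with hr
  have hrt : Tendsto r atTop atTop := by
    exact tendsto_atTop_add_const_right _ _ (hC.atTop_mul_const (by positivity))
  have hppos : ∀ᶠ n in atTop, 0 < p n := by
    filter_upwards [hC.eventually_gt_atTop 0] with n hn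
    rcases (hp0 n).lt_or_eq with h | h
    · exact h
    · have : C n / p n = 0 := by rw [← h, div_zero]
      exact absurd this hn.ne'
  have hbound : ∀ᶠ n in atTop, ((P n) {ω | T n ≤ ∑ j, (∑ i, X n i j * ε n ω i) ^ 2}).toReal
      ≤ σ2 * dmax / r n := by
    filter_upwards [hppos, hrt.eventually_gt_atTop 0, eventually_gt_atTop 0,
      eventually_ge_atTop N3] with n hpn hrn hn hnN
    have hn' : (0 : ℝ) < n := by exact_mod_cast hn
    have hTr : T n = n * p n * r n := by
      simp only [hT, hr]; field_simp
    have hTpos : 0 < T n := by rw [hTr]; positivity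
    have key := markov_aux (P n) (fun j ω => ∑ i, X n i j * ε n ω i)
      (fun j => Real.toNNReal (σ2 * ∑ i, X n i j ^ 2)) (σ2 * (n * dmax)) ?_ ?_ (T n) hTpos
    · refine key.trans (le_of_eq ?_)
      rw [hcard, hTr]; field_simp
    · intro j
      have := hε n (fun i => X n i j)
      rw [cov_aux n _ σ2 hσ2 (hXc n j)] at this
      simpa using this
    · intro j
      rw [Real.coe_toNNReal _ (mul_nonneg hσ2.le (Finset.sum_nonneg fun i _ => sq_nonneg _))]
      refine mul_le_mul_of_nonneg_left ?_ hσ2.le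
      have := (hN3 n hnN (Pi.single j 1)).2
      rw [enorm2_sq_aux] at this
      have e1 : ∑ i, (Pi.single j (1 : ℝ) : ((g : Fin (G n)) × Fin (pg n g)) → ℝ) i ^ 2 = 1 := by
        rw [Finset.sum_eq_single j]
        · simp
        · intro b _ hb; simp [hb]
        · simp
      rw [e1, mul_one] at this
      refine le_trans (le_of_eq ?_) this
      simp [Matrix.mul_apply, sq]
  have hnoise : Tendsto (fun n => ((P n) {ω | T n ≤ ∑ j, (∑ i, X n i j * ε n ω i) ^ 2}).toReal)
      atTop (nhds 0) := by
    refine tendsto_of_tendsto_of_tendsto_of_le_of_le' tendsto_const_nhds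
      (hrt.const_div_atTop (σ2 * dmax)) (Eventually.of_forall fun n => ENNReal.toReal_nonneg) hbound
  have hδ1 := hδo 1 one_pos
  have hs1 := hs' (σ2 / 2) (by positivity)
  have hlow : Tendsto (fun n => 1 - (((P n) {ω | 1 * Real.sqrt n ≤ |sSup (Set.range (δ n ω))|}).toReal
      + ((P n) {ω | σ2 / 2 ≤ |s' n ω - σ2|}).toReal
      + ((P n) {ω | T n ≤ ∑ j, (∑ i, X n i j * ε n ω i) ^ 2}).toReal)) atTop (nhds 1) := by
    simpa using (tendsto_const_nhds (x := (1 : ℝ))).sub ((hδ1.add hs1).add hnoise)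
  refine tendsto_of_tendsto_of_tendsto_of_le_of_le' hlow tendsto_const_nhds ?_
    (Eventually.of_forall fun n => ?_)
  swap
  · exact measureReal_le_one (μ := P n)
  filter_upwards [hppos, eventually_gt_atTop 0, eventually_ge_atTop N3, eventually_ge_atTop N4]
    with n hpn hn hnN3 hnN4
  have hn' : (0 : ℝ) < n := by exact_mod_cast hn
  set E1 := {ω | 1 * Real.sqrt n ≤ |sSup (Set.range (δ n ω))|} with hE1
  set E2 := {ω | σ2 / 2 ≤ |s' n ω - σ2|} with hE2
  set E3 := {ω | T n ≤ ∑ j, (∑ i, X n i j * ε n ω i) ^ 2} with hE3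
  set S := {ω | (fun i => βhat n ω i - β0 n i) ⬝ᵥ ((Sg n ω)⁻¹ *ᵥ fun i => βhat n ω i - β0 n i)
          ≤ C n} with hS
  have hcover : (Set.univ : Set (Ω n)) ⊆ S ∪ (E1 ∪ E2 ∪ E3) := by
    intro ω _
    by_cases h1 : ω ∈ E1
    · simp [h1]
    by_cases h2 : ω ∈ E2
    · simp [h2]
    by_cases h3 : ω ∈ E3
    · simp [h3]
    left
    simp only [hE1, hE2, hE3, Set.mem_setOf_eq, not_le, one_mul] at h1 h2 h3
    simp only [hS, Set.mem_setOf_eq]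
    have hs2 : σ2 / 2 < s' n ω := by
      have := (abs_lt.mp h2).1; linarith
    have hspos : 0 < s' n ω := by linarith
    have hδle : ∀ g, δ n ω g ≤ Real.sqrt n := fun g =>
      ((le_csSup (Set.finite_range _).bddAbove ⟨g, rfl⟩).trans (le_abs_self _)).trans h1.le
    have hδsq : ∀ g, δ n ω g ^ 2 ≤ n := fun g => by
      calc δ n ω g ^ 2 ≤ Real.sqrt n ^ 2 := pow_le_pow_left₀ (hδ0 n ω g) (hδle g) 2
        _ = n := Real.sq_sqrt hn'.le
    have hbias : ∑ j : ((g : Fin (G n)) × Fin (pg n g)), (δ n ω j.1 * β0 n j) ^ 2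
        ≤ n * p n * U ^ 2 := by
      rw [Fintype.sum_sigma]
      have : n * p n * U ^ 2 = ∑ g, (n : ℝ) * (pg n g * U ^ 2) := by
        simp only [hp, Finset.mul_sum, Finset.sum_mul]
        exact Finset.sum_congr rfl fun g _ => by ring
      rw [this]
      refine Finset.sum_le_sum fun g _ => ?_
      have e : ∑ j, (δ n ω g * β0 n ⟨g, j⟩) ^ 2 = δ n ω g ^ 2 * ∑ j, β0 n ⟨g, j⟩ ^ 2 := by
        rw [Finset.mul_sum]
        exact Finset.sum_congr rfl fun j _ => by ring
      show ∑ j, (δ n ω g * β0 n ⟨g, j⟩) ^ 2 ≤ _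
      rw [e]
      refine mul_le_mul (hδsq g) ?_ (Finset.sum_nonneg fun i _ => sq_nonneg _) hn'.le
      rcases Nat.eq_zero_or_pos (pg n g) with h0 | h0
      · have hemp : IsEmpty (Fin (pg n g)) := by rw [h0]; infer_instance
        rw [Finset.univ_eq_empty, Finset.sum_empty]
        positivity
      · have hU := hN4 n hnN4 g
        have hU2 : enorm2 (fun j => β0 n ⟨g, j⟩) ^ 2 ≤ U ^ 2 :=
          pow_le_pow_left₀ (Real.sqrt_nonneg _) hU 2
        rw [enorm2_sq_aux] at hU2
        have : (1 : ℝ) ≤ pg n g := by exact_mod_cast h0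
        nlinarith [sq_nonneg U]
    have hdet := det_aux (X n) (fun i => δ n ω i.1) (fun i => hδ0 n ω i.1) (n * dmin)
      (by positivity) (fun v => by
        have := (hN3 n hnN3 v).1
        rwa [enorm2_sq_aux] at this) (β0 n) (ε n ω) (s' n ω) hspos
      (fun i => βhat n ω i - β0 n i) (by
        rw [← hΔ n ω, ← hy, ← hβhat]; rfl)
    rw [hSg, hΔ]
    refine hdet.trans ?_
    have hsum : ∑ j, (∑ i, X n i j * ε n ω i) ^ 2
        + ∑ j : ((g : Fin (G n)) × Fin (pg n g)), (δ n ω j.1 * β0 n j) ^ 2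
        ≤ n * (C n * σ2 * dmin / 4) := by
      have h3' := h3.le
      simp only [hT] at h3'
      linarith
    have hnn : 0 ≤ ∑ j, (∑ i, X n i j * ε n ω i) ^ 2
        + ∑ j : ((g : Fin (G n)) × Fin (pg n g)), (δ n ω j.1 * β0 n j) ^ 2 :=
      add_nonneg (Finset.sum_nonneg fun i _ => sq_nonneg _)
        (Finset.sum_nonneg fun i _ => sq_nonneg _)
    calc 2 / (s' n ω * (n * dmin)) * (∑ j, (∑ i, X n i j * ε n ω i) ^ 2
        + ∑ j : ((g : Fin (G n)) × Fin (pg n g)), (δ n ω j.1 * β0 n j) ^ 2)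
        ≤ 2 / (σ2 / 2 * (n * dmin)) * (n * (C n * σ2 * dmin / 4)) := by
          refine mul_le_mul ?_ hsum hnn (by positivity)
          gcongr
      _ = C n := by field_simp; ring
  have hm := measureReal_mono (μ := P n) hcover
  have h1 := measureReal_union_le (μ := P n) S (E1 ∪ E2 ∪ E3)
  have h2 := measureReal_union_le (μ := P n) (E1 ∪ E2) E3
  have h3 := measureReal_union_le (μ := P n) E1 E2
  rw [probReal_univ] at hm
  simp only [measureReal_def] at hm h1 h2 h3
  linarith
end

section
/- (Supplementary Lemma 2.) Suppose (B1)–(B4) hold. Then the generic posterior mean β̂_n is a consistent estimator of β⁰_n in the sense that E‖β̂_n − β⁰_n‖² = O_p(p_n/n) → 0 (the expectation taken over the Gaussian error distribution, conditional on Δ_n), and moreover ‖β̂_n − β⁰_n‖² ≍ p_n/n, i.e. ‖β̂_n − β⁰_n‖² is both O_p(p_n/n) and Ω_p(p_n/n). -/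
open MeasureTheory ProbabilityTheory Matrix Filter Asymptotics

lemma enorm2_sq {ι : Type*} [Fintype ι] (v : ι → ℝ) : enorm2 v ^ 2 = v ⬝ᵥ v := by
  unfold enorm2
  rw [Real.sq_sqrt (Finset.sum_nonneg fun i _ => sq_nonneg _)]
  simp [dotProduct, sq]

lemma dp_nonneg {ι : Type*} [Fintype ι] (v : ι → ℝ) : 0 ≤ v ⬝ᵥ v := by
  rw [← enorm2_sq]; positivity

lemma dp_cs {ι : Type*} [Fintype ι] (v w : ι → ℝ) : (v ⬝ᵥ w) ^ 2 ≤ (v ⬝ᵥ v) * (w ⬝ᵥ w) := by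
  have := Finset.sum_mul_sq_le_sq_mul_sq Finset.univ v w
  simpa [dotProduct, sq] using this

lemma dp_add {ι : Type*} [Fintype ι] (v w : ι → ℝ) :
    (v + w) ⬝ᵥ (v + w) ≤ 2 * (v ⬝ᵥ v) + 2 * (w ⬝ᵥ w) := by
  simp only [dotProduct, Finset.mul_sum, ← Finset.sum_add_distrib]
  refine Finset.sum_le_sum fun i _ => ?_
  simp only [Pi.add_apply]
  nlinarith [sq_nonneg (v i - w i)]

lemma gram_dp {κ ι : Type*} [Fintype κ] [Fintype ι] (X : Matrix κ ι ℝ) (u v : ι → ℝ) :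
    u ⬝ᵥ ((Xᵀ * X) *ᵥ v) = (X *ᵥ u) ⬝ᵥ (X *ᵥ v) := by
  rw [← Matrix.mulVec_mulVec, Matrix.dotProduct_mulVec, Matrix.vecMul_transpose]

section det
variable {κ ι : Type*} [Fintype κ] [Fintype ι] [DecidableEq ι] (X : Matrix κ ι ℝ) (d : ι → ℝ)
  (hd : ∀ i, 0 ≤ d i) (a b t : ℝ) (ha : 0 < a) (ht : ∀ i, d i ≤ t) (hb : 0 ≤ b)
  (hlo : ∀ v : ι → ℝ, a * (v ⬝ᵥ v) ≤ v ⬝ᵥ ((Xᵀ * X) *ᵥ v))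
  (hhi : ∀ v : ι → ℝ, v ⬝ᵥ ((Xᵀ * X) *ᵥ v) ≤ b * (v ⬝ᵥ v))

include hd in
lemma diag_quad (v : ι → ℝ) : 0 ≤ v ⬝ᵥ (Matrix.diagonal d *ᵥ v) := by
  simp only [dotProduct, Matrix.mulVec_diagonal]
  refine Finset.sum_nonneg fun i _ => ?_
  nlinarith [mul_nonneg (hd i) (mul_self_nonneg (v i))]

include hd in
lemma S_quad (v : ι → ℝ) :
    v ⬝ᵥ ((Xᵀ * X) *ᵥ v) ≤ v ⬝ᵥ ((Xᵀ * X + Matrix.diagonal d) *ᵥ v) := by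
  rw [Matrix.add_mulVec, dotProduct_add]
  linarith [diag_quad d hd v]

include hd ha hlo in
lemma S_unit : IsUnit (Xᵀ * X + Matrix.diagonal d).det := by
  rw [← Matrix.isUnit_iff_isUnit_det, ← Matrix.mulVec_injective_iff_isUnit]
  intro u v huv
  have h0 : (Xᵀ * X + Matrix.diagonal d) *ᵥ (u - v) = 0 := by
    rw [Matrix.mulVec_sub]; exact sub_eq_zero.2 huv
  have h1 := hlo (u - v)
  have h2 := S_quad X d hd (u - v)
  rw [h0, dotProduct_zero] at h2
  have h3 : (u - v) ⬝ᵥ (u - v) = 0 := by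
    have := dp_nonneg (u - v)
    nlinarith
  exact sub_eq_zero.1 (dotProduct_self_eq_zero.1 h3)

include hd ha hlo in
lemma S_inv_le (w : ι → ℝ) :
    a ^ 2 * (((Xᵀ * X + Matrix.diagonal d)⁻¹ *ᵥ w) ⬝ᵥ ((Xᵀ * X + Matrix.diagonal d)⁻¹ *ᵥ w))
      ≤ w ⬝ᵥ w := by
  have hu := S_unit X d hd a ha hlo
  set S := Xᵀ * X + Matrix.diagonal d with hS
  set v := S⁻¹ *ᵥ w with hv
  have hw : S *ᵥ v = w := by
    rw [hv, Matrix.mulVec_mulVec, Matrix.mul_nonsing_inv _ hu, Matrix.one_mulVec]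
  have h1 := hlo v
  have h2 := S_quad X d hd v
  rw [← hS, hw] at h2
  have h3 := dp_cs v w
  have h4 := dp_nonneg v
  have h5 := dp_nonneg w
  rcases h4.eq_or_lt with h | h
  · rw [← h]; linarith
  · have h6 : (a * (v ⬝ᵥ v)) ^ 2 ≤ (v ⬝ᵥ w) ^ 2 :=
      pow_le_pow_left₀ (by positivity) (h1.trans h2) 2
    have h7 : (v ⬝ᵥ v) * (a ^ 2 * (v ⬝ᵥ v)) ≤ (v ⬝ᵥ v) * (w ⬝ᵥ w) := by nlinarith
    exact le_of_mul_le_mul_left h7 h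

include hhi hb in
lemma M_le (v : ι → ℝ) : ((Xᵀ * X) *ᵥ v) ⬝ᵥ ((Xᵀ * X) *ᵥ v) ≤ b ^ 2 * (v ⬝ᵥ v) := by
  set u := (Xᵀ * X) *ᵥ v with hu
  have h1 : u ⬝ᵥ u = (X *ᵥ u) ⬝ᵥ (X *ᵥ v) := by
    conv_lhs => rw [hu]
    rw [← hu, gram_dp]
  have h2 := dp_cs (X *ᵥ u) (X *ᵥ v)
  rw [← h1, ← gram_dp X u u, ← gram_dp X v v] at h2
  have h3 := hhi u
  have h4 := hhi v
  have h5 := dp_nonneg u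
  have h6 := dp_nonneg v
  have h7 : 0 ≤ v ⬝ᵥ ((Xᵀ * X) *ᵥ v) := by rw [gram_dp]; exact dp_nonneg _
  have h8 := mul_le_mul h3 h4 h7 (by positivity)
  rcases h5.eq_or_lt with h | h
  · rw [← h]; positivity
  · have : (u ⬝ᵥ u) * (u ⬝ᵥ u) ≤ (u ⬝ᵥ u) * (b ^ 2 * (v ⬝ᵥ v)) := by nlinarith
    exact le_of_mul_le_mul_left this h

include hd ht in
lemma D_le (v : ι → ℝ) :
    (Matrix.diagonal d *ᵥ v) ⬝ᵥ (Matrix.diagonal d *ᵥ v) ≤ t ^ 2 * (v ⬝ᵥ v) := by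
  simp only [dotProduct, Matrix.mulVec_diagonal, Finset.mul_sum]
  refine Finset.sum_le_sum fun i _ => ?_
  have : d i ^ 2 ≤ t ^ 2 := pow_le_pow_left₀ (hd i) (ht i) 2
  nlinarith [mul_le_mul_of_nonneg_right this (mul_self_nonneg (v i))]

include hd ha hlo hhi hb ht in
lemma S_inv_ge (w : ι → ℝ) :
    w ⬝ᵥ w ≤ 2 * (b ^ 2 + t ^ 2) *
     (((Xᵀ * X + Matrix.diagonal d)⁻¹ *ᵥ w) ⬝ᵥ ((Xᵀ * X + Matrix.diagonal d)⁻¹ *ᵥ w)) := by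
  have hu := S_unit X d hd a ha hlo
  set S := Xᵀ * X + Matrix.diagonal d with hS
  set v := S⁻¹ *ᵥ w with hv
  have hw : (Xᵀ * X) *ᵥ v + Matrix.diagonal d *ᵥ v = w := by
    rw [← Matrix.add_mulVec, ← hS, hv, Matrix.mulVec_mulVec, Matrix.mul_nonsing_inv _ hu,
      Matrix.one_mulVec]
  have h1 := M_le X b hb hhi v
  have h2 := D_le d hd t ht v
  have h3 := dp_add ((Xᵀ * X) *ᵥ v) (Matrix.diagonal d *ᵥ v)
  rw [hw] at h3
  linarith

include hd ha hlo in
lemma S_trace : 0 ≤ Matrix.trace ((Xᵀ * X + Matrix.diagonal d)⁻¹ * (Xᵀ * X) *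
      (Xᵀ * X + Matrix.diagonal d)⁻¹) ∧
    Matrix.trace ((Xᵀ * X + Matrix.diagonal d)⁻¹ * (Xᵀ * X) *
      (Xᵀ * X + Matrix.diagonal d)⁻¹) ≤ Fintype.card ι / a := by
  have hu := S_unit X d hd a ha hlo
  set S := Xᵀ * X + Matrix.diagonal d with hS
  have hsym : Sᵀ = S := by simp [hS, Matrix.transpose_mul]
  have hisym : (S⁻¹)ᵀ = S⁻¹ := by rw [Matrix.transpose_nonsing_inv, hsym]
  have key : ∀ i, (S⁻¹ * (Xᵀ * X) * S⁻¹) i i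
      = (S⁻¹ *ᵥ Pi.single i 1) ⬝ᵥ ((Xᵀ * X) *ᵥ (S⁻¹ *ᵥ Pi.single i 1)) := by
    intro i
    have : (S⁻¹ * (Xᵀ * X) * S⁻¹) i i
      = Pi.single i 1 ⬝ᵥ ((S⁻¹ * (Xᵀ * X) * S⁻¹) *ᵥ Pi.single i 1) := by
      simp
    rw [this, ← Matrix.mulVec_mulVec, ← Matrix.mulVec_mulVec, Matrix.dotProduct_mulVec,
      ← Matrix.mulVec_transpose, hisym]
  constructor
  · refine Finset.sum_nonneg fun i _ => ?_
    rw [Matrix.diag_apply, key, gram_dp]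
    exact dp_nonneg _
  · have : ∀ i, (S⁻¹ * (Xᵀ * X) * S⁻¹) i i ≤ 1 / a := by
      intro i
      rw [key]
      set v := S⁻¹ *ᵥ Pi.single i 1 with hv
      have hw : S *ᵥ v = Pi.single i 1 := by
        rw [hv, Matrix.mulVec_mulVec, Matrix.mul_nonsing_inv _ hu, Matrix.one_mulVec]
      have h1 := hlo v
      have h2 := S_quad X d hd v
      rw [← hS, hw] at h2
      have h3 : v ⬝ᵥ Pi.single i 1 = v i := by simp
      rw [h3] at h2
      have h4 : v i ^ 2 ≤ v ⬝ᵥ v := by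
        have := Finset.single_le_sum (f := fun j => v j * v j)
          (fun j _ => mul_self_nonneg (v j)) (Finset.mem_univ i)
        simp only [dotProduct]; nlinarith
      have h5 : a * v i ^ 2 ≤ v i := by nlinarith
      refine h2.trans ?_
      rw [le_div_iff₀ ha]
      by_contra hc
      push Not at hc
      nlinarith
    calc _ ≤ ∑ i : ι, 1 / a := Finset.sum_le_sum fun i _ => this i
      _ = _ := by simp [div_eq_mul_inv]

end det

noncomputable def etaG : ℝ := (gaussianReal 0 1).real {x : ℝ | 1 ≤ x ^ 2}

lemma etaG_pos : 0 < etaG := by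
  unfold etaG
  rw [measureReal_def, ENNReal.toReal_pos_iff]
  refine ⟨?_, measure_lt_top _ _⟩
  rw [pos_iff_ne_zero]
  intro h
  have h1 := gaussianReal_absolutelyContinuous' 0 (v := 1) one_ne_zero h
  have h2 : volume (Set.Ioo (1 : ℝ) 2) ≤ volume {x : ℝ | 1 ≤ x ^ 2} := by
    refine measure_mono fun x hx => ?_
    simp only [Set.mem_Ioo, Set.mem_ofPred_eq] at *
    nlinarith
  rw [h1, Real.volume_Ioo] at h2
  norm_num at h2

lemma etaG_le : etaG ≤ 1 := measureReal_le_one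

set_option linter.unusedSectionVars false
section prob
variable {Ω ι : Type*} [MeasurableSpace Ω] [Fintype ι] (P : Measure Ω) [IsProbabilityMeasure P]
  (Z : Ω → ι → ℝ) (s : ι → NNReal)
  (hZ : ∀ j, Measure.map (fun ω => Z ω j) P = gaussianReal 0 (s j))

include hZ in
lemma Z_aem (j : ι) : AEMeasurable (fun ω => Z ω j) P := by
  by_contra h
  have := hZ j
  rw [Measure.map_of_not_aemeasurable h] at this
  exact (IsProbabilityMeasure.ne_zero (gaussianReal 0 (s j))) this.symm

include hZ in
lemma Z_int (j : ι) : Integrable (fun ω => Z ω j ^ 2) P ∧ ∫ ω, Z ω j ^ 2 ∂P = s j := by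
  have hm := Z_aem P Z s hZ j
  have h1 : MemLp (fun ω => Z ω j) 2 P := by
    have := memLp_id_gaussianReal (μ := 0) (v := s j) 2
    rw [← hZ j] at this
    exact (memLp_map_measure_iff (by fun_prop) hm).1 this
  refine ⟨h1.integrable_sq, ?_⟩
  have h2 : ∫ ω, Z ω j ^ 2 ∂P = ∫ x, x ^ 2 ∂(gaussianReal 0 (s j)) := by
    rw [← hZ j, integral_map hm (by fun_prop)]
  rw [h2]
  have h3 := variance_fun_id_gaussianReal (μ := 0) (v := s j)
  rw [variance_of_integral_eq_zero (by fun_prop) integral_id_gaussianReal] at h3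
  exact h3

include hZ in
lemma Z_upper (H K : ℝ) (hK : 0 < K) (hH : 0 ≤ H) (hs : ∀ j, (s j : ℝ) ≤ H) :
    P.real {ω | K * Fintype.card ι < Z ω ⬝ᵥ Z ω} ≤ H / K := by
  have e : ∀ ω, Z ω ⬝ᵥ Z ω = ∑ j, Z ω j ^ 2 := fun ω => by simp [dotProduct, sq]
  rcases isEmpty_or_nonempty ι with h | ⟨⟨j0⟩⟩
  · have : {ω | K * Fintype.card ι < Z ω ⬝ᵥ Z ω} = ∅ := by
      ext ω; simp [dotProduct]
    rw [this, measureReal_empty]; positivity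
  have hp : (0 : ℝ) < Fintype.card ι := by
    exact_mod_cast Fintype.card_pos_iff.2 ⟨j0⟩
  have hint : Integrable (fun ω => Z ω ⬝ᵥ Z ω) P := by
    simp only [e]
    exact integrable_finsetSum _ fun j _ => (Z_int P Z s hZ j).1
  have hI : ∫ ω, Z ω ⬝ᵥ Z ω ∂P ≤ Fintype.card ι * H := by
    simp only [e]
    rw [integral_finsetSum _ fun j _ => (Z_int P Z s hZ j).1]
    calc _ ≤ ∑ j : ι, H := Finset.sum_le_sum fun j _ => by rw [(Z_int P Z s hZ j).2]; exact hs j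
      _ = _ := by simp
  have hM := mul_meas_ge_le_integral_of_nonneg (μ := P)
    (Eventually.of_forall fun ω => dp_nonneg (Z ω)) hint (K * Fintype.card ι)
  have hmono : P.real {ω | K * Fintype.card ι < Z ω ⬝ᵥ Z ω}
      ≤ P.real {ω | K * Fintype.card ι ≤ Z ω ⬝ᵥ Z ω} :=
    measureReal_mono fun ω hω => by
      simp only [Set.mem_ofPred_eq] at *
      exact hω.le
  refine hmono.trans ?_
  rw [le_div_iff₀ hK]
  have := hM.trans hI
  refine le_of_mul_le_mul_left ?_ hp
  linarith

include hZ in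
lemma Z_single (j : ι) : etaG ≤ P.real {ω | (s j : ℝ) ≤ Z ω j ^ 2} := by
  have hm := Z_aem P Z s hZ j
  have hg : gaussianReal 0 (s j) = (gaussianReal 0 1).map (fun x => Real.sqrt (s j) * x) := by
    rw [gaussianReal_map_const_mul]
    congr 1
    · simp
    · ext; simp
  have h1 : P.real {ω | (s j : ℝ) ≤ Z ω j ^ 2}
      = (gaussianReal 0 1).real {x | (s j : ℝ) ≤ (Real.sqrt (s j) * x) ^ 2} := by
    have hms : MeasurableSet {x : ℝ | (s j : ℝ) ≤ x ^ 2} :=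
      measurableSet_le measurable_const (by fun_prop)
    have a1 := Measure.map_apply_of_aemeasurable hm hms
    rw [hZ j, hg, Measure.map_apply (by fun_prop) hms] at a1
    simp only [measureReal_def]
    exact congrArg ENNReal.toReal a1.symm
  rw [h1]
  refine measureReal_mono fun x hx => ?_
  simp only [Set.mem_ofPred_eq] at *
  rw [mul_pow, Real.sq_sqrt (s j).coe_nonneg]
  have := (s j).coe_nonneg
  nlinarith

include hZ in
lemma Z_lower (L : ℝ) (hL : 0 ≤ L) (hs : ∀ j, L ≤ (s j : ℝ)) :
    etaG / 2 ≤ P.real {ω | etaG / 2 * L * Fintype.card ι ≤ Z ω ⬝ᵥ Z ω} := by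
  have e : ∀ ω, Z ω ⬝ᵥ Z ω = ∑ j, Z ω j ^ 2 := fun ω => by simp [dotProduct, sq]
  have h0 := etaG_pos
  rcases isEmpty_or_nonempty ι with h | ⟨⟨j0⟩⟩
  · have : {ω | etaG / 2 * L * Fintype.card ι ≤ Z ω ⬝ᵥ Z ω} = Set.univ := by
      ext ω; simp [dotProduct]
    rw [this, probReal_univ]; linarith [etaG_le]
  have hp : (0 : ℝ) < Fintype.card ι := by
    exact_mod_cast Fintype.card_pos_iff.2 ⟨j0⟩
  set p : ℝ := (Fintype.card ι : ℝ) with hpdef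
  let A : ι → Set Ω := fun j => {ω | (s j : ℝ) ≤ Z ω j ^ 2}
  have hA : ∀ j, NullMeasurableSet (A j) P := fun j =>
    nullMeasurableSet_le aemeasurable_const ((Z_aem P Z s hZ j).pow_const 2)
  let W : Ω → ℝ := fun ω => ∑ j, (A j).indicator (fun _ => (1 : ℝ)) ω
  have hWi : ∀ j, Integrable ((A j).indicator (fun _ => (1 : ℝ))) P := fun j =>
    (integrable_const 1).indicator₀ (hA j)
  have hWint : Integrable W P := integrable_finsetSum _ fun j _ => hWi j
  have hEW : p * etaG ≤ ∫ ω, W ω ∂P := by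
    rw [integral_finsetSum _ fun j _ => hWi j]
    calc p * etaG = ∑ j : ι, etaG := by simp [hpdef]
      _ ≤ _ := Finset.sum_le_sum fun j _ => by
        rw [integral_indicator₀ (hA j)]
        simpa using Z_single P Z s hZ j
  let E : Set Ω := {ω | etaG / 2 * p ≤ W ω}
  have hE : NullMeasurableSet E P := nullMeasurableSet_le aemeasurable_const hWint.aemeasurable
  have hWle : ∀ ω, W ω ≤ p := fun ω => by
    calc W ω ≤ ∑ j : ι, (1 : ℝ) := Finset.sum_le_sum fun j _ =>
          Set.indicator_le_self' (fun _ _ => zero_le_one) ω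
      _ = p := by simp [hpdef]
  have hpt : ∀ ω, W ω ≤ E.indicator (fun _ => p) ω + etaG / 2 * p := fun ω => by
    by_cases hω : ω ∈ E
    · rw [Set.indicator_of_mem hω]; have := hWle ω; nlinarith
    · rw [Set.indicator_of_notMem hω]
      have : W ω < etaG / 2 * p := not_le.1 hω
      linarith
  have hEint : Integrable (E.indicator (fun _ => p)) P := (integrable_const p).indicator₀ hE
  have h1 := integral_mono hWint (hEint.add (integrable_const (etaG / 2 * p))) hpt
  rw [integral_add' hEint (integrable_const _), integral_indicator₀ hE] at h1
  simp only [integral_const, measureReal_restrict_apply_univ, probReal_univ, smul_eq_mul,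
    one_mul] at h1
  have h2 : etaG / 2 ≤ P.real E := by
    refine le_of_mul_le_mul_left ?_ hp
    nlinarith
  refine h2.trans (measureReal_mono fun ω hω => ?_)
  simp only [Set.mem_ofPred_eq, E] at *
  have h3 : L * W ω ≤ Z ω ⬝ᵥ Z ω := by
    rw [e, Finset.mul_sum]
    refine Finset.sum_le_sum fun j _ => ?_
    by_cases hj : ω ∈ A j
    · rw [Set.indicator_of_mem hj]; have : (s j : ℝ) ≤ Z ω j ^ 2 := hj
      linarith [hs j]
    · rw [Set.indicator_of_notMem hj]; nlinarith [sq_nonneg (Z ω j)]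
  nlinarith

end prob

section alg
variable {κ ι : Type*} [Fintype κ] [DecidableEq κ] [Fintype ι] [DecidableEq ι]

lemma inv_alg (c : ℝ) (hc : c ≠ 0) (M D : Matrix ι ι ℝ) (hu : IsUnit (M + D).det) :
    (c⁻¹ • M + c⁻¹ • D)⁻¹ = c • (M + D)⁻¹ := by
  apply Matrix.inv_eq_right_inv
  rw [← smul_add, Matrix.smul_mul, Matrix.mul_smul, smul_smul, inv_mul_cancel₀ hc, one_smul,
    Matrix.mul_nonsing_inv _ hu]

lemma psi_X (c : ℝ) (X : Matrix κ ι ℝ) (hX : ∀ j, ∑ i, X i j = 0) :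
    ((1 : Matrix κ κ ℝ) - c • Matrix.of fun _ _ => (1 : ℝ)) * X = X := by
  have : (Matrix.of fun _ _ => (1 : ℝ) : Matrix κ κ ℝ) * X = 0 := by
    ext i j
    simp [Matrix.mul_apply, hX]
  rw [Matrix.sub_mul, Matrix.smul_mul, this]
  simp

lemma m_alg (c : ℝ) (hc : c ≠ 0) (M D : Matrix ι ι ℝ) (hu : IsUnit (M + D).det) (w : ι → ℝ) :
    -(c⁻¹ • ((c⁻¹ • M + c⁻¹ • D)⁻¹ *ᵥ w)) = -((M + D)⁻¹ *ᵥ w) := by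
  rw [inv_alg c hc M D hu, Matrix.smul_mulVec, smul_smul, inv_mul_cancel₀ hc, one_smul]

lemma V_alg (c σ2 : ℝ) (hc : c ≠ 0) (X : Matrix κ ι ℝ) (hX : ∀ j, ∑ i, X i j = 0)
    (D : Matrix ι ι ℝ) (hu : IsUnit (Xᵀ * X + D).det) :
    (σ2 / c) • ((((c)⁻¹ • (Xᵀ * X) + (c)⁻¹ • D)⁻¹)
        * ((c)⁻¹ • (Xᵀ
            * ((1 : Matrix κ κ ℝ) - (c)⁻¹ • Matrix.of fun _ _ => (1 : ℝ))
            * X))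
        * (((c)⁻¹ • (Xᵀ * X) + (c)⁻¹ • D)⁻¹)) =
    σ2 • ((Xᵀ * X + D)⁻¹ * (Xᵀ * X) * (Xᵀ * X + D)⁻¹) := by
  rw [inv_alg c hc _ D hu, Matrix.mul_assoc Xᵀ, psi_X _ X hX]
  simp only [Matrix.smul_mul, Matrix.mul_smul, smul_smul]
  congr 1
  field_simp

lemma err_alg (X : Matrix κ ι ℝ) (D : Matrix ι ι ℝ) (hu : IsUnit (Xᵀ * X + D).det)
    (b : ι → ℝ) (e : κ → ℝ) :
    (Xᵀ * X + D)⁻¹ *ᵥ (Xᵀ *ᵥ (X *ᵥ b + e)) - b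
      = -((Xᵀ * X + D)⁻¹ *ᵥ (D *ᵥ b)) + (Xᵀ * X + D)⁻¹ *ᵥ (Xᵀ *ᵥ e) := by
  have h : b = (Xᵀ * X + D)⁻¹ *ᵥ ((Xᵀ * X + D) *ᵥ b) := by
    rw [Matrix.mulVec_mulVec, Matrix.nonsing_inv_mul _ hu, Matrix.one_mulVec]
  have h2 : (Xᵀ * X + D)⁻¹ *ᵥ (Xᵀ *ᵥ (X *ᵥ b + e)) - b
      = (Xᵀ * X + D)⁻¹ *ᵥ (Xᵀ *ᵥ (X *ᵥ b + e)) - (Xᵀ * X + D)⁻¹ *ᵥ ((Xᵀ * X + D) *ᵥ b) := by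
    rw [← h]
  rw [h2, Matrix.mulVec_add, Matrix.add_mulVec, Matrix.mulVec_mulVec, Matrix.mulVec_add,
    Matrix.mulVec_add]
  abel

lemma var_alg (c σ2 : ℝ) (X : Matrix κ ι ℝ) (hX : ∀ j, ∑ i, X i j = 0) (j : ι) :
    (fun i => X i j) ⬝ᵥ ((σ2 • ((1 : Matrix κ κ ℝ) - c • Matrix.of fun _ _ => (1 : ℝ))) *ᵥ
      (fun i => X i j)) = σ2 * (Pi.single j 1 ⬝ᵥ ((Xᵀ * X) *ᵥ Pi.single j 1)) := by
  have h1 : (fun i => X i j) = X *ᵥ Pi.single j 1 := by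
    ext i; simp
  rw [gram_dp, h1, Matrix.smul_mulVec, Matrix.mulVec_mulVec, psi_X c X hX, dotProduct_smul,
    smul_eq_mul]

end alg

lemma beta_bound {G : ℕ} (pg : Fin G → ℕ) (b : ((g : Fin G) × Fin (pg g)) → ℝ) (U : ℝ)
    (hU : ∀ g, enorm2 (fun j => b ⟨g, j⟩) ≤ U) :
    b ⬝ᵥ b ≤ U ^ 2 *
      ∑ g ∈ Finset.univ.filter (fun g => ∃ j, b ⟨g, j⟩ ≠ 0), (pg g : ℝ) := by
  have h1 : b ⬝ᵥ b = ∑ g, enorm2 (fun j => b ⟨g, j⟩) ^ 2 := by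
    simp only [enorm2_sq, dotProduct]
    rw [Fintype.sum_sigma]
  rw [h1, Finset.mul_sum, Finset.sum_filter]
  refine Finset.sum_le_sum fun g _ => ?_
  split_ifs with h
  · obtain ⟨j, hj⟩ := h
    have h2 : (1 : ℝ) ≤ pg g := by
      exact_mod_cast Nat.one_le_iff_ne_zero.2 (fun h0 => by
        have := j.2; omega)
    have h3 : enorm2 (fun j => b ⟨g, j⟩) ^ 2 ≤ U ^ 2 :=
      pow_le_pow_left₀ (Real.sqrt_nonneg _) (hU g) 2
    nlinarith [sq_nonneg U]
  · push Not at h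
    simp [enorm2_sq, h, dotProduct]

open MeasureTheory ProbabilityTheory Matrix Filter Asymptotics in
/-- Supplementary Lemma 2: under (B1)–(B4), the generic posterior mean satisfies
`E‖β̂_n − β⁰_n‖² = O_p(p_n/n) → 0` (expectation over the Gaussian errors conditional on `Δ_n`,
which equals `‖m_n‖² + tr V_n`), and `‖β̂_n − β⁰_n‖² ≍ p_n/n`. -/
theorem stmt_4
    -- probability spaces
    (Ω : ℕ → Type) [∀ n, MeasurableSpace (Ω n)]
    (P : (n : ℕ) → Measure (Ω n)) [∀ n, IsProbabilityMeasure (P n)]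
    -- grouped design: group `g` has size `pg n g`; coordinates are indexed by the sigma type
    (G : ℕ → ℕ) (pg : (n : ℕ) → Fin (G n) → ℕ)
    (X : (n : ℕ) → Matrix (Fin n) ((g : Fin (G n)) × Fin (pg n g)) ℝ)
    (hXc : ∀ n j, ∑ i, X n i j = 0)
    -- true model
    (β0 : (n : ℕ) → ((g : Fin (G n)) × Fin (pg n g)) → ℝ)
    (σ2 : ℝ) (hσ2 : 0 < σ2)
    (ε : (n : ℕ) → Ω n → Fin n → ℝ)
    (hε : ∀ n, IsMvGaussian (P n) (ε n) 0
      (σ2 • ((1 : Matrix (Fin n) (Fin n) ℝ) - ((n : ℝ))⁻¹ • Matrix.of fun _ _ => (1 : ℝ))))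
    (y : (n : ℕ) → Ω n → Fin n → ℝ) (hy : ∀ n ω, y n ω = X n *ᵥ β0 n + ε n ω)
    -- (B1)
    (hB1a : (fun n => (∑ g, pg n g : ℝ)) =o[atTop] fun n => (n : ℝ))
    (hB1b : ∃ Pmax : ℝ, ∃ N : ℕ, ∀ n, N ≤ n → ∀ g, (pg n g : ℝ) ≤ Pmax)
    -- (B2): the number of truly important predictors is `o` of the total number
    (hB2 : (fun n => ∑ g ∈ Finset.univ.filter (fun g => ∃ j, β0 n ⟨g, j⟩ ≠ 0), (pg n g : ℝ))
      =o[atTop] fun n => (∑ g, pg n g : ℝ))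
    -- (B3)
    (dmin dmax : ℝ) (hdmin : 0 < dmin)
    (hB3 : ∃ N : ℕ, ∀ n, N ≤ n → ∀ v : ((g : Fin (G n)) × Fin (pg n g)) → ℝ,
      (n : ℝ) * dmin * enorm2 v ^ 2 ≤ v ⬝ᵥ (((X n)ᵀ * X n) *ᵥ v) ∧
      v ⬝ᵥ (((X n)ᵀ * X n) *ᵥ v) ≤ (n : ℝ) * dmax * enorm2 v ^ 2)
    -- (B4)
    (hB4 : ∃ U : ℝ, ∃ N : ℕ, ∀ n, N ≤ n → ∀ g, enorm2 (fun j => β0 n ⟨g, j⟩) ≤ U)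
    -- generic posterior quantities
    (δ : (n : ℕ) → Ω n → Fin (G n) → ℝ) (hδ0 : ∀ n ω g, 0 ≤ δ n ω g)
    (hδo : IsLittleOP P (fun n ω => sSup (Set.range (δ n ω))) fun n => Real.sqrt n)
    (Δ : (n : ℕ) → Ω n → Matrix ((g : Fin (G n)) × Fin (pg n g)) ((g : Fin (G n)) × Fin (pg n g)) ℝ)
    (hΔ : ∀ n ω, Δ n ω = Matrix.diagonal fun i => δ n ω i.1)
    (βhat : (n : ℕ) → Ω n → ((g : Fin (G n)) × Fin (pg n g)) → ℝ)
    (hβhat : ∀ n ω, βhat n ω = ((X n)ᵀ * X n + Δ n ω)⁻¹ *ᵥ ((X n)ᵀ *ᵥ y n ω))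
    -- `m_n` and `V_n`: the conditional mean and covariance of `β̂_n − β⁰_n` given `Δ_n`,
    -- so that `‖m_n‖² + tr(V_n)` is the conditional expectation `E‖β̂_n − β⁰_n‖²`
    (m : (n : ℕ) → Ω n → ((g : Fin (G n)) × Fin (pg n g)) → ℝ)
    (hm : ∀ n ω, m n ω = -(((n : ℝ))⁻¹ •
      ((((n : ℝ))⁻¹ • ((X n)ᵀ * X n) + ((n : ℝ))⁻¹ • Δ n ω)⁻¹ *ᵥ (Δ n ω *ᵥ β0 n))))
    (V : (n : ℕ) → Ω n → Matrix ((g : Fin (G n)) × Fin (pg n g)) ((g : Fin (G n)) × Fin (pg n g)) ℝ)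
    (hV : ∀ n ω, V n ω = (σ2 / (n : ℝ)) •
      (((((n : ℝ))⁻¹ • ((X n)ᵀ * X n) + ((n : ℝ))⁻¹ • Δ n ω)⁻¹)
        * (((n : ℝ))⁻¹ • ((X n)ᵀ
            * ((1 : Matrix (Fin n) (Fin n) ℝ) - ((n : ℝ))⁻¹ • Matrix.of fun _ _ => (1 : ℝ))
            * X n))
        * ((((n : ℝ))⁻¹ • ((X n)ᵀ * X n) + ((n : ℝ))⁻¹ • Δ n ω)⁻¹))) :
    -- `E‖β̂_n − β⁰_n‖² = ‖m_n‖² + tr(V_n) = O_p(p_n/n) → 0`, and `‖β̂_n − β⁰_n‖² ≍ p_n/n`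
    IsBigOP P (fun n ω => enorm2 (m n ω) ^ 2 + Matrix.trace (V n ω))
      (fun n => (∑ g, pg n g : ℝ) / (n : ℝ)) ∧
    IsLittleOP P (fun n ω => enorm2 (m n ω) ^ 2 + Matrix.trace (V n ω)) (fun _ => 1) ∧
    IsThetaP P (fun n ω => (enorm2 fun i => βhat n ω i - β0 n i) ^ 2)
      (fun n => (∑ g, pg n g : ℝ) / (n : ℝ)) := by
  obtain ⟨N3, hB3⟩ := hB3
  obtain ⟨U, N4, hB4⟩ := hB4
  set D : ℝ := max dmax dmin with hD
  have hDpos : 0 < D := lt_of_lt_of_le hdmin (le_max_right _ _)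
  set p : ℕ → ℝ := fun n => ∑ g, (pg n g : ℝ) with hp
  have hp0 : ∀ n, 0 ≤ p n := fun n => Finset.sum_nonneg fun g _ => Nat.cast_nonneg _
  have hcard : ∀ n, (Fintype.card ((g : Fin (G n)) × Fin (pg n g)) : ℝ) = p n := by
    intro n; simp [hp]
  have hqp : ∀ᶠ n : ℕ in atTop,
      ∑ g ∈ Finset.univ.filter (fun g => ∃ j, β0 n ⟨g, j⟩ ≠ 0), (pg n g : ℝ) ≤ p n := by
    refine Eventually.of_forall fun n => ?_
    exact Finset.sum_le_sum_of_subset_of_nonneg (Finset.filter_subset _ _)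
      fun _ _ _ => Nat.cast_nonneg _
  set T : (n : ℕ) → Ω n → ℝ := fun n ω => sSup (Set.range (δ n ω)) with hT
  have hδT : ∀ n ω g, δ n ω g ≤ |T n ω| := fun n ω g =>
    (le_csSup (Set.finite_range _).bddAbove ⟨g, rfl⟩).trans (le_abs_self _)
  set Z : (n : ℕ) → Ω n → ((g : Fin (G n)) × Fin (pg n g)) → ℝ :=
    fun n ω => (X n)ᵀ *ᵥ ε n ω with hZ
  set K : ℝ := U ^ 2 / dmin ^ 2 with hK
  have hK0 : 0 ≤ K := by positivity
  -- the deterministic facts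
  have det : ∀ᶠ n : ℕ in atTop, 0 < (n : ℝ) ∧ ∀ ω,
      (∀ c : ℝ, 0 < c → ¬ (c * Real.sqrt n ≤ |T n ω|) →
        enorm2 (m n ω) ^ 2 ≤ c ^ 2 * K * (p n / n)) ∧
      0 ≤ (V n ω).trace ∧ (V n ω).trace ≤ σ2 / dmin * (p n / n) ∧
      (enorm2 fun i => βhat n ω i - β0 n i) ^ 2 ≤
        2 * enorm2 (m n ω) ^ 2 + 2 * (Z n ω ⬝ᵥ Z n ω / (n * dmin) ^ 2) ∧
      (¬ (1 * Real.sqrt n ≤ |T n ω|) → Z n ω ⬝ᵥ Z n ω / (2 * (n * n) * (D ^ 2 + 1)) ≤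
        2 * (enorm2 fun i => βhat n ω i - β0 n i) ^ 2 + 2 * enorm2 (m n ω) ^ 2) := by
    filter_upwards [hqp, eventually_ge_atTop N3, eventually_ge_atTop N4, eventually_ge_atTop 1]
      with n hq h3 h4 h1
    have hn1 : (1 : ℝ) ≤ n := by exact_mod_cast h1
    have hn : (0 : ℝ) < n := by linarith
    refine ⟨hn, fun ω => ?_⟩
    have hlo : ∀ v : ((g : Fin (G n)) × Fin (pg n g)) → ℝ,
        (n * dmin) * (v ⬝ᵥ v) ≤ v ⬝ᵥ (((X n)ᵀ * X n) *ᵥ v) := fun v => by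
      rw [← enorm2_sq]; exact (hB3 n h3 v).1
    have hhi : ∀ v : ((g : Fin (G n)) × Fin (pg n g)) → ℝ,
        v ⬝ᵥ (((X n)ᵀ * X n) *ᵥ v) ≤ (n * D) * (v ⬝ᵥ v) := fun v => by
      refine (hB3 n h3 v).2.trans ?_
      rw [enorm2_sq]
      have := dp_nonneg v
      have := le_max_left dmax dmin
      gcongr
    have ha : 0 < (n : ℝ) * dmin := by positivity
    have hb : 0 ≤ (n : ℝ) * D := by positivity
    set d : ((g : Fin (G n)) × Fin (pg n g)) → ℝ := fun i => δ n ω i.1 with hd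
    have hd0 : ∀ i, 0 ≤ d i := fun i => hδ0 n ω i.1
    have hdT : ∀ i, d i ≤ |T n ω| := fun i => hδT n ω i.1
    have hu := S_unit (X n) d hd0 _ ha hlo
    have hm' : m n ω = -(((X n)ᵀ * X n + diagonal d)⁻¹ *ᵥ (diagonal d *ᵥ β0 n)) := by
      rw [hm, hΔ]
      exact m_alg (n : ℝ) hn.ne' _ _ hu _
    have hV' : V n ω = σ2 • (((X n)ᵀ * X n + diagonal d)⁻¹ * ((X n)ᵀ * X n) *
        ((X n)ᵀ * X n + diagonal d)⁻¹) := by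
      rw [hV, hΔ]
      exact V_alg (n : ℝ) σ2 hn.ne' (X n) (hXc n) _ hu
    set w := ((X n)ᵀ * X n + diagonal d)⁻¹ *ᵥ Z n ω with hw
    have herr : (fun i => βhat n ω i - β0 n i) = m n ω + w := by
      have := err_alg (X n) (diagonal d) hu (β0 n) (ε n ω)
      rw [hm', ← this, hβhat, hy, hΔ]
      rfl
    have htr := S_trace (X n) d hd0 _ ha hlo
    have hmsq : (n * dmin) ^ 2 * enorm2 (m n ω) ^ 2 ≤ |T n ω| ^ 2 * (U ^ 2 * p n) := by
      have e1 := S_inv_le (X n) d hd0 _ ha hlo (diagonal d *ᵥ β0 n)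
      have e2 := D_le d hd0 _ hdT (β0 n)
      have e3 := beta_bound (pg n) (β0 n) U (hB4 n h4)
      rw [enorm2_sq, hm', neg_dotProduct_neg]
      refine e1.trans (e2.trans ?_)
      gcongr
      refine e3.trans ?_
      gcongr
    refine ⟨fun c hc hTc => ?_, ?_, ?_, ?_, fun hTc => ?_⟩
    · push Not at hTc
      have e4 : |T n ω| ^ 2 ≤ c ^ 2 * n := by
        have := pow_le_pow_left₀ (abs_nonneg _) hTc.le 2
        rwa [mul_pow, Real.sq_sqrt hn.le] at this
      have e5 : |T n ω| ^ 2 * (U ^ 2 * p n) ≤ c ^ 2 * n * (U ^ 2 * p n) := by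
        have := hp0 n
        gcongr
      have e6 : (n * dmin) ^ 2 * enorm2 (m n ω) ^ 2 ≤
          (n * dmin) ^ 2 * (c ^ 2 * K * (p n / n)) := by
        refine (hmsq.trans e5).trans (le_of_eq ?_)
        rw [hK]; field_simp
      exact le_of_mul_le_mul_left e6 (by positivity)
    · rw [hV', Matrix.trace_smul, smul_eq_mul]
      exact mul_nonneg hσ2.le htr.1
    · rw [hV', Matrix.trace_smul, smul_eq_mul]
      refine (mul_le_mul_of_nonneg_left htr.2 hσ2.le).trans (le_of_eq ?_)
      rw [hcard]; field_simp
    · rw [herr, enorm2_sq, enorm2_sq]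
      refine (dp_add _ _).trans ?_
      have := S_inv_le (X n) d hd0 _ ha hlo (Z n ω)
      have : w ⬝ᵥ w ≤ Z n ω ⬝ᵥ Z n ω / (n * dmin) ^ 2 := by
        rw [le_div_iff₀ (by positivity)]; linarith
      linarith
    · push Not at hTc
      have e4 : |T n ω| ^ 2 ≤ n * n := by
        have := pow_le_pow_left₀ (abs_nonneg _) hTc.le 2
        rw [mul_pow, Real.sq_sqrt hn.le] at this
        nlinarith
      have e1 := S_inv_ge (X n) d hd0 _ _ _ ha hdT hb hlo hhi (Z n ω)
      have e2 : w ⬝ᵥ w ≤ 2 * (enorm2 fun i => βhat n ω i - β0 n i) ^ 2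
          + 2 * enorm2 (m n ω) ^ 2 := by
        have := dp_add (m n ω + w) (-(m n ω))
        rw [neg_dotProduct_neg, add_neg_cancel_comm] at this
        rw [herr, enorm2_sq, enorm2_sq]; exact this
      refine le_trans ?_ e2
      rw [div_le_iff₀ (by positivity)]
      refine e1.trans ?_
      have e3 := dp_nonneg w
      have : 2 * ((n * D) ^ 2 + |T n ω| ^ 2) ≤ 2 * (n * n) * (D ^ 2 + 1) := by nlinarith
      nlinarith [mul_le_mul_of_nonneg_right this e3]
  -- the probabilistic facts
  have law : ∀ᶠ n : ℕ in atTop, ∃ s : ((g : Fin (G n)) × Fin (pg n g)) → NNReal,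
      (∀ j, Measure.map (fun ω => Z n ω j) (P n) = gaussianReal 0 (s j)) ∧
      (∀ j, (s j : ℝ) ≤ σ2 * n * D) ∧ (∀ j, σ2 * n * dmin ≤ (s j : ℝ)) := by
    filter_upwards [eventually_ge_atTop N3] with n h3
    have hv : ∀ j : ((g : Fin (G n)) × Fin (pg n g)),
        enorm2 (Pi.single j 1 : ((g : Fin (G n)) × Fin (pg n g)) → ℝ) ^ 2 = 1 := fun j => by
      rw [enorm2_sq]; simp
    have hq0 : ∀ j : ((g : Fin (G n)) × Fin (pg n g)),
        0 ≤ σ2 * (Pi.single j 1 ⬝ᵥ (((X n)ᵀ * X n) *ᵥ Pi.single j 1)) := fun j => by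
      rw [gram_dp]; exact mul_nonneg hσ2.le (dp_nonneg _)
    refine ⟨fun j => Real.toNNReal
      (σ2 * (Pi.single j 1 ⬝ᵥ (((X n)ᵀ * X n) *ᵥ Pi.single j 1))), fun j => ?_, fun j => ?_,
      fun j => ?_⟩
    · have := hε n (fun i => X n i j)
      rw [var_alg _ σ2 (X n) (hXc n) j] at this
      simpa [hZ, Matrix.mulVec, dotProduct] using this
    · rw [Real.coe_toNNReal _ (hq0 j)]
      have h := (hB3 n h3 (Pi.single j 1)).2
      rw [hv, mul_one] at h
      have hDD : (n : ℝ) * dmax ≤ n * D := by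
        have := le_max_left dmax dmin
        gcongr
      rw [mul_assoc]
      exact mul_le_mul_of_nonneg_left (h.trans hDD) hσ2.le
    · rw [Real.coe_toNNReal _ (hq0 j)]
      have h := (hB3 n h3 (Pi.single j 1)).1
      rw [hv, mul_one] at h
      rw [mul_assoc]
      exact mul_le_mul_of_nonneg_left h hσ2.le
  have hbad : ∀ c : ℝ, 0 < c → ∀ γ : ℝ, 0 < γ → ∀ᶠ n : ℕ in atTop,
      (P n).real {ω | c * Real.sqrt n ≤ |T n ω|} < γ := fun c hc γ hγ =>
    (hδo c hc).eventually (gt_mem_nhds hγ)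
  have hpn : Tendsto (fun n : ℕ => p n / n) atTop (nhds 0) := hB1a.tendsto_div_nhds_zero
  -- bound on the conditional expectation
  have hE : ∀ᶠ n : ℕ in atTop, ∀ ω, ¬ (1 * Real.sqrt n ≤ |T n ω|) →
      |enorm2 (m n ω) ^ 2 + (V n ω).trace| ≤ (K + σ2 / dmin) * (p n / n) := by
    filter_upwards [det] with n hn ω hω
    obtain ⟨-, hn⟩ := hn
    obtain ⟨e1, e2, e3, -, -⟩ := hn ω
    have := e1 1 one_pos hω
    rw [abs_of_nonneg (by positivity)]
    linarith
  have hσd : 0 < σ2 / dmin := by positivity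
  refine ⟨fun γ hγ => ⟨K + σ2 / dmin, by positivity, ?_⟩, fun γ hγ => ?_,
    fun γ hγ => ?_, ?_⟩
  · obtain ⟨N, hN⟩ := eventually_atTop.1 (hE.and (hbad 1 one_pos γ hγ))
    refine ⟨N, fun n hn => lt_of_le_of_lt ?_ (hN n hn).2⟩
    refine measureReal_mono (μ := P n) fun ω hω => ?_
    simp only [Set.mem_ofPred_eq] at *
    by_contra hc
    exact absurd ((hN n hn).1 ω hc) (not_le.2 hω)
  · rw [Metric.tendsto_atTop]
    intro r hr
    have hlim : Tendsto (fun n : ℕ => (K + σ2 / dmin) * (p n / n)) atTop (nhds 0) := by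
      simpa using hpn.const_mul (K + σ2 / dmin)
    obtain ⟨N, hN⟩ := eventually_atTop.1
      ((hE.and (hbad 1 one_pos r hr)).and (hlim.eventually (gt_mem_nhds hγ)))
    refine ⟨N, fun n hn => ?_⟩
    obtain ⟨⟨a1, a2⟩, a3⟩ := hN n hn
    rw [Real.dist_eq, sub_zero, abs_of_nonneg ENNReal.toReal_nonneg]
    refine lt_of_le_of_lt ?_ a2
    refine measureReal_mono (μ := P n) fun ω hω => ?_
    simp only [Set.mem_ofPred_eq] at *
    by_contra hc
    have := a1 ω hc
    linarith
  · set K' : ℝ := 4 * σ2 * D / γ with hK'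
    have hK'0 : 0 < K' := by positivity
    refine ⟨2 * K + 2 * (K' / dmin ^ 2), by positivity, ?_⟩
    obtain ⟨N, hN⟩ := eventually_atTop.1 ((det.and law).and (hbad 1 one_pos (γ / 2) (by linarith)))
    refine ⟨N, fun n hn => ?_⟩
    obtain ⟨⟨⟨hn0, a1⟩, s, a2, a3, -⟩, a4⟩ := hN n hn
    have u1 := Z_upper (P n) (Z n) s a2 (σ2 * n * D) (K' * n) (by positivity) (by positivity) a3
    rw [hcard] at u1
    have u2 : σ2 * n * D / (K' * n) = γ / 4 := by rw [hK']; field_simp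
    rw [u2] at u1
    have u3 : (P n).real {ω | (2 * K + 2 * (K' / dmin ^ 2)) * (p n / n) <
        |(enorm2 fun i => βhat n ω i - β0 n i) ^ 2|} ≤
        (P n).real ({ω | 1 * Real.sqrt n ≤ |T n ω|} ∪ {ω | K' * n * p n < Z n ω ⬝ᵥ Z n ω}) := by
      refine measureReal_mono fun ω hω => ?_
      simp only [Set.mem_union, Set.mem_ofPred_eq] at *
      by_contra hc
      push Not at hc
      obtain ⟨c1, c2⟩ := hc
      obtain ⟨e1, -, -, e4, -⟩ := a1 ω
      have e5 := e1 1 one_pos (not_le.2 c1)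
      rw [abs_of_nonneg (sq_nonneg _)] at hω
      have e6 : Z n ω ⬝ᵥ Z n ω / (n * dmin) ^ 2 ≤ K' / dmin ^ 2 * (p n / n) := by
        rw [div_le_iff₀ (by positivity)]
        refine c2.trans (le_of_eq ?_)
        field_simp
      linarith
    have u4 := measureReal_union_le (μ := P n) {ω | 1 * Real.sqrt n ≤ |T n ω|}
      {ω | K' * n * p n < Z n ω ⬝ᵥ Z n ω}
    change (P n).real _ < γ
    linarith
  · have hη := etaG_pos
    set c1 : ℝ := etaG / 2 * (σ2 * dmin) / (2 * (D ^ 2 + 1)) with hc1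
    have hc10 : 0 < c1 := by positivity
    obtain ⟨c, hc0, hc, hcle⟩ : ∃ c : ℝ, 0 < c ∧ c ≤ 1 ∧ c ^ 2 * K ≤ c1 / 4 := by
      refine ⟨min 1 (c1 / (4 * (K + 1))), by positivity, min_le_left _ _, ?_⟩
      set c := min 1 (c1 / (4 * (K + 1))) with hcc
      have h0 : 0 < c := by positivity
      have h1 : c ≤ 1 := min_le_left _ _
      have h2 : c ≤ c1 / (4 * (K + 1)) := min_le_right _ _
      rw [le_div_iff₀ (by positivity)] at h2
      have h3 : c ^ 2 ≤ c := by nlinarith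
      nlinarith
    refine ⟨c1 / 4, etaG / 4, by positivity, by positivity, ?_⟩
    obtain ⟨N, hN⟩ := eventually_atTop.1 ((det.and law).and
      (hbad c hc0 (etaG / 4) (by linarith)))
    refine ⟨N, fun n hn => ?_⟩
    obtain ⟨⟨⟨hn0, a1⟩, s, a2, -, a3⟩, a4⟩ := hN n hn
    have u1 := Z_lower (P n) (Z n) s a2 (σ2 * n * dmin) (by positivity) a3
    rw [hcard] at u1
    have u3 : (P n).real {ω | etaG / 2 * (σ2 * n * dmin) * p n ≤ Z n ω ⬝ᵥ Z n ω} ≤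
        (P n).real ({ω | c1 / 4 * (p n / n) ≤ |(enorm2 fun i => βhat n ω i - β0 n i) ^ 2|} ∪
          {ω | c * Real.sqrt n ≤ |T n ω|}) := by
      refine measureReal_mono fun ω hω => ?_
      simp only [Set.mem_union, Set.mem_ofPred_eq] at *
      by_contra hcon
      push Not at hcon
      obtain ⟨b1, b2⟩ := hcon
      obtain ⟨e1, -, -, -, e5⟩ := a1 ω
      have b3 : |T n ω| < 1 * Real.sqrt n :=
        b2.trans_le (mul_le_mul_of_nonneg_right hc (Real.sqrt_nonneg _))
      have e6 := e1 c hc0 (not_le.2 b2)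
      have e7 := e5 (not_le.2 b3)
      rw [abs_of_nonneg (sq_nonneg _)] at b1
      have e8 : c1 * (p n / n) ≤ Z n ω ⬝ᵥ Z n ω / (2 * (n * n) * (D ^ 2 + 1)) := by
        rw [le_div_iff₀ (by positivity)]
        refine le_trans (le_of_eq ?_) hω
        rw [hc1]; field_simp
      have e9 : c ^ 2 * K * (p n / n) ≤ c1 / 4 * (p n / n) :=
        mul_le_mul_of_nonneg_right hcle (div_nonneg (hp0 n) hn0.le)
      linarith
    have u4 := measureReal_union_le (μ := P n)
      {ω | c1 / 4 * (p n / n) ≤ |(enorm2 fun i => βhat n ω i - β0 n i) ^ 2|}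
      {ω | c * Real.sqrt n ≤ |T n ω|}
    change etaG / 4 ≤ (P n).real _
    linarith
end

section
/- (Boundary identity for the constrained minimizer, used in the proof of Supplementary Lemma 3.) Let Σ ∈ ℝ^{p×p} be symmetric positive definite, β̂ ∈ ℝ^p, C > 0, let the coordinates of ℝ^p be partitioned into groups of sizes p_g with positive weights û_g > 0, and let K(β) = Σ_{g=1}^G √p_g ‖β_g‖₂ / û_g². Then every minimizer β̃ of K over the ellipsoid S = {β : (β − β̂)^⊤ Σ^{-1} (β − β̂) ≤ C} satisfies (β̃ − β̂)^⊤ Σ^{-1} (β̃ − β̂) = min{C, β̂^⊤ Σ^{-1} β̂}. -/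
open MeasureTheory ProbabilityTheory Matrix Filter Asymptotics

lemma kpen_smul (G : ℕ) (pg : Fin G → ℕ) (uh : Fin G → ℝ)
    (t : ℝ) (ht : 0 ≤ t) (β : ((g : Fin G) × Fin (pg g)) → ℝ) :
    (∑ g, Real.sqrt (pg g) * enorm2 (fun j => t * β ⟨g, j⟩) / uh g ^ 2)
      = t * ∑ g, Real.sqrt (pg g) * enorm2 (fun j => β ⟨g, j⟩) / uh g ^ 2 := by
  rw [Finset.mul_sum]
  refine Finset.sum_congr rfl fun g _ => ?_
  have h : enorm2 (fun j => t * β ⟨g, j⟩) = t * enorm2 (fun j => β ⟨g, j⟩) := by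
    unfold enorm2
    simp only [mul_pow]
    rw [← Finset.mul_sum, Real.sqrt_mul (sq_nonneg t), Real.sqrt_sq ht]
  rw [h]
  ring

lemma kpen_pos (G : ℕ) (pg : Fin G → ℕ) (uh : Fin G → ℝ) (huh : ∀ g, 0 < uh g)
    (β : ((g : Fin G) × Fin (pg g)) → ℝ) (hβ : β ≠ 0) :
    0 < ∑ g, Real.sqrt (pg g) * enorm2 (fun j => β ⟨g, j⟩) / uh g ^ 2 := by
  obtain ⟨⟨g, j⟩, hgj⟩ := Function.ne_iff.mp hβ
  refine Finset.sum_pos' (fun g _ => ?_) ⟨g, Finset.mem_univ _, ?_⟩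
  · unfold enorm2
    positivity
  · have h1 : (0 : ℝ) < pg g := by exact_mod_cast j.pos
    have h2 : 0 < enorm2 (fun j => β ⟨g, j⟩) := by
      unfold enorm2
      apply Real.sqrt_pos.mpr
      refine Finset.sum_pos' (fun _ _ => sq_nonneg _) ⟨j, Finset.mem_univ _, ?_⟩
      have : β ⟨g, j⟩ ≠ 0 := hgj
      positivity
    have := huh g
    positivity

open Matrix in
/-- Boundary identity for the constrained minimizer (proof of Supplementary Lemma 3):
any minimizer of `K` over the ellipsoid `S` satisfies
`(β̃ − β̂)ᵀΣ⁻¹(β̃ − β̂) = min{C, β̂ᵀΣ⁻¹β̂}`. -/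
theorem stmt_15
    (G : ℕ) (pg : Fin G → ℕ)
    (Sg : Matrix ((g : Fin G) × Fin (pg g)) ((g : Fin G) × Fin (pg g)) ℝ)
    (hSg : Sg.PosDef)
    (βhat : ((g : Fin G) × Fin (pg g)) → ℝ)
    (C : ℝ) (hC : 0 < C)
    (uh : Fin G → ℝ) (huh : ∀ g, 0 < uh g) :
    ∀ βtil : ((g : Fin G) × Fin (pg g)) → ℝ,
      -- `β̃ ∈ S` ...
      ((fun i => βtil i - βhat i) ⬝ᵥ (Sg⁻¹ *ᵥ fun i => βtil i - βhat i) ≤ C ∧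
        -- ... and `β̃` minimizes `K` over `S`
        (∀ β : ((g : Fin G) × Fin (pg g)) → ℝ,
          (fun i => β i - βhat i) ⬝ᵥ (Sg⁻¹ *ᵥ fun i => β i - βhat i) ≤ C →
          (∑ g, Real.sqrt (pg g) * enorm2 (fun j => βtil ⟨g, j⟩) / uh g ^ 2)
            ≤ ∑ g, Real.sqrt (pg g) * enorm2 (fun j => β ⟨g, j⟩) / uh g ^ 2)) →
      (fun i => βtil i - βhat i) ⬝ᵥ (Sg⁻¹ *ᵥ fun i => βtil i - βhat i)
        = min C (βhat ⬝ᵥ (Sg⁻¹ *ᵥ βhat)) := by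
  rintro βtil ⟨hfeas, hmin⟩
  by_cases h0 : βtil = 0
  · subst h0
    have e : (fun i => (0 : ((g : Fin G) × Fin (pg g)) → ℝ) i - βhat i) = -βhat := by
      ext i; simp
    rw [e] at hfeas ⊢
    rw [Matrix.mulVec_neg, neg_dotProduct_neg] at hfeas ⊢
    exact (min_eq_right hfeas).symm
  have hK := kpen_pos G pg uh huh βtil h0
  -- scaling by `t ∈ [0,1)` leaves the ellipsoid
  have key : ∀ t : ℝ, 0 ≤ t → t < 1 →
      C < (fun i => t * βtil i - βhat i) ⬝ᵥ (Sg⁻¹ *ᵥ fun i => t * βtil i - βhat i) := by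
    intro t ht ht1
    by_contra hcon
    have h := hmin (fun i => t * βtil i) (not_lt.mp hcon)
    rw [kpen_smul G pg uh t ht βtil] at h
    nlinarith
  have hQ : C ≤ βhat ⬝ᵥ (Sg⁻¹ *ᵥ βhat) := by
    have h := key 0 le_rfl one_pos
    have e : (fun i => (0 : ℝ) * βtil i - βhat i) = -βhat := by
      ext i; simp
    rw [e, Matrix.mulVec_neg, neg_dotProduct_neg] at h
    exact h.le
  rw [min_eq_left hQ]
  refine le_antisymm hfeas ?_
  have hcont : Continuous (fun t : ℝ =>
      (fun i => t * βtil i - βhat i) ⬝ᵥ (Sg⁻¹ *ᵥ fun i => t * βtil i - βhat i)) := by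
    unfold Matrix.mulVec dotProduct
    fun_prop
  have hlim := (hcont.tendsto 1).mono_left (nhdsWithin_le_nhds (s := Set.Iio 1))
  simp only [one_mul] at hlim
  refine ge_of_tendsto hlim ?_
  filter_upwards [Ioo_mem_nhdsLT (zero_lt_one' ℝ)] with t ht
  exact (key t ht.1.le ht.2).le
end

section
/- (Residual variance consistency, used in the proof of Supplementary Lemma 7.) Let X_n ∈ ℝ^{n×p_n} be nonrandom with each column summing to zero and X_n^⊤X_n invertible with p_n = o(n), let y = X_n β⁰_n + ε with ε ~ N(0, σ*²Ψ_n), σ*² > 0, Ψ_n = I_n − (1/n)J_n, and let β̂_LS = (X_n^⊤X_n)^{-1}X_n^⊤y be the least squares estimator. Then |‖y − X_n β̂_LS‖²/(n − p_n) − σ*²| = O_p(n^{-1/2}), i.e. for every γ > 0 there exist ζ_γ and N_γ with P{|‖y − X_n β̂_LS‖²/(n − p_n) − σ*²| > ζ_γ n^{-1/2}} < γ for all n ≥ N_γ. -/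
open MeasureTheory ProbabilityTheory Matrix Filter Asymptotics

lemma aux_deriv (v : ℝ) (q : ℝ → ℝ) (q' : ℝ → ℝ) (hq : ∀ t, HasDerivAt q (q' t) t) :
    deriv (fun t => q t * Real.exp (v * t ^ 2 / 2))
      = fun t => (q' t + q t * (v * t)) * Real.exp (v * t ^ 2 / 2) := by
  funext t
  have h1 : HasDerivAt (fun t : ℝ => v * t ^ 2 / 2) (v * t) t := by
    have := (((hasDerivAt_id t).pow 2).const_mul v).div_const 2
    refine this.congr_deriv ?_
    simp
    ring
  have := ((hq t).mul h1.exp).deriv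
  refine Eq.trans this ?_
  ring

lemma gauss_fourth (v : NNReal) : ∫ x, x ^ 4 ∂(gaussianReal 0 v) = 3 * (v : ℝ) ^ 2 := by
  have h0 := iteratedDeriv_mgf_zero (X := fun x : ℝ => x) (μ := gaussianReal 0 v)
    (by simp) 4
  have h1 : mgf (fun x : ℝ => x) (gaussianReal 0 v)
      = fun t => (fun _ : ℝ => (1 : ℝ)) t * Real.exp ((v : ℝ) * t ^ 2 / 2) := by
    rw [mgf_fun_id_gaussianReal]; funext t; simp
  have h2 : ∫ x, x ^ 4 ∂(gaussianReal 0 v) = iteratedDeriv 4 (mgf (fun x : ℝ => x)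
      (gaussianReal 0 v)) 0 := by
    rw [h0]; rfl
  rw [h2, h1]
  simp only [iteratedDeriv_succ', iteratedDeriv_zero]
  rw [aux_deriv v (fun _ => 1) (fun _ => 0) (fun t => hasDerivAt_const _ _)]
  have e1 : (fun t : ℝ => ((0 : ℝ) + 1 * (v * t)) * Real.exp ((v : ℝ) * t ^ 2 / 2))
     = fun t => (fun t : ℝ => (v : ℝ) * t) t * Real.exp ((v : ℝ) * t ^ 2 / 2) := by
    funext t; simp
  rw [e1, aux_deriv v _ (fun _ => (v : ℝ)) (fun t => by
    simpa using (hasDerivAt_id t).const_mul (v : ℝ))]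
  rw [aux_deriv v (fun t => (v : ℝ) + v * t * (v * t)) (fun t => 2 * (v : ℝ) ^ 2 * t) (fun t => by
    have hh := (hasDerivAt_id t).const_mul (v : ℝ)
    have := (hh.mul hh).const_add (v : ℝ)
    refine this.congr_deriv ?_
    simp
    ring)]
  rw [aux_deriv v (fun t => 2 * (v : ℝ) ^ 2 * t + ((v : ℝ) + v * t * (v * t)) * (v * t))
    (fun t => 2 * (v : ℝ) ^ 2 + (v : ℝ) ^ 2 + 3 * (v : ℝ) ^ 3 * t ^ 2) (fun t => by
    have hh := (hasDerivAt_id t).const_mul (v : ℝ)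
    have h3 := (((hh.mul hh).const_add (v : ℝ)).mul hh).const_add (0 : ℝ)
    have h4 := (hasDerivAt_id t).const_mul (2 * (v : ℝ) ^ 2)
    have := h4.add (((hh.mul hh).const_add (v : ℝ)).mul hh)
    refine this.congr_deriv ?_
    simp
    ring)]
  simp
  ring

lemma gauss_second (v : NNReal) : ∫ x, x ^ 2 ∂(gaussianReal 0 v) = (v : ℝ) := by
  have h := variance_fun_id_gaussianReal (μ := 0) (v := v)
  rw [variance_eq_integral (by fun_prop)] at h
  simpa using h

section moments
variable {Ω : Type*} [MeasurableSpace Ω] {P : Measure Ω} [IsProbabilityMeasure P]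

lemma lin_facts {W : Ω → ℝ} {v : NNReal} (h : Measure.map W P = gaussianReal 0 v) :
    MemLp W 4 P ∧ ∫ ω, W ω ^ 2 ∂P = v ∧ ∫ ω, W ω ^ 4 ∂P = 3 * (v : ℝ) ^ 2 := by
  have hm : AEMeasurable W P := aemeasurable_of_map_neZero (by rw [h]; infer_instance)
  refine ⟨?_, ?_, ?_⟩
  · have := memLp_id_gaussianReal' (μ := 0) (v := v) 4 (by simp)
    rw [← h] at this
    exact (memLp_map_measure_iff (by fun_prop) hm).1 this
  · rw [← gauss_second, ← h, integral_map hm (by fun_prop)]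
  · rw [← gauss_fourth, ← h, integral_map hm (by fun_prop)]

lemma int4 {f : Ω → ℝ} (hf : MemLp f 4 P) : Integrable (fun ω => f ω ^ 4) P := by
  have := hf.integrable_norm_pow (p := 4) (by norm_num)
  refine this.congr (ae_of_all _ fun ω => ?_)
  simp only [Real.norm_eq_abs]
  exact Even.pow_abs (by decide) _

lemma int2 {f : Ω → ℝ} (hf : MemLp f 4 P) : Integrable (fun ω => f ω ^ 2) P :=
  (hf.mono_exponent (by norm_num : (2 : ENNReal) ≤ 4)).integrable_sq

lemma cross {f g : Ω → ℝ} (hf : MemLp f 4 P) (hg : MemLp g 4 P) :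
    Integrable (fun ω => f ω ^ 2 * g ω ^ 2) P ∧
    ∫ ω, f ω ^ 2 * g ω ^ 2 ∂P = (1 / 12) * (∫ ω, (f ω + g ω) ^ 4 ∂P + ∫ ω, (f ω - g ω) ^ 4 ∂P
      - 2 * ∫ ω, f ω ^ 4 ∂P - 2 * ∫ ω, g ω ^ 4 ∂P) := by
  have i1 : Integrable (fun ω => (f ω + g ω) ^ 4) P := int4 (hf.add hg)
  have i2 : Integrable (fun ω => (f ω - g ω) ^ 4) P := int4 (hf.sub hg)
  have i3 := (int4 hf).const_mul 2
  have i4 := (int4 hg).const_mul 2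
  have i12 : Integrable (fun ω => (f ω + g ω) ^ 4 + (f ω - g ω) ^ 4) P := i1.add i2
  have i123 : Integrable (fun ω => (f ω + g ω) ^ 4 + (f ω - g ω) ^ 4 - 2 * f ω ^ 4) P := i12.sub i3
  have e : (fun ω => f ω ^ 2 * g ω ^ 2) = fun ω => (1 / 12) *
      ((f ω + g ω) ^ 4 + (f ω - g ω) ^ 4 - 2 * f ω ^ 4 - 2 * g ω ^ 4) := by
    funext ω; ring
  constructor
  · rw [e]
    exact (((i1.add i2).sub i3).sub i4).const_mul _
  · rw [e, integral_const_mul, integral_sub i123 i4,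
      integral_sub i12 i3, integral_add i1 i2, integral_const_mul, integral_const_mul]

lemma second_moment {ι : Type*} [Fintype ι] (R : Ω → ι → ℝ) (V : Matrix ι ι ℝ)
    (hR : IsMvGaussian P R 0 V) (hV : ∀ a : ι → ℝ, 0 ≤ a ⬝ᵥ (V *ᵥ a))
    (hs : Vᵀ = V) (t : ℝ) :
    Integrable (fun ω => (∑ i, R ω i ^ 2 - t) ^ 2) P ∧
    ∫ ω, (∑ i, R ω i ^ 2 - t) ^ 2 ∂P = (V.trace - t) ^ 2 + 2 * (V * V).trace := by
  classical
  have hsym : ∀ i j, V j i = V i j := fun i j => by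
    conv_rhs => rw [← hs]
    rfl
  have key : ∀ a : ι → ℝ, MemLp (fun ω => ∑ i, a i * R ω i) 4 P ∧
      ∫ ω, (∑ i, a i * R ω i) ^ 2 ∂P = a ⬝ᵥ (V *ᵥ a) ∧
      ∫ ω, (∑ i, a i * R ω i) ^ 4 ∂P = 3 * (a ⬝ᵥ (V *ᵥ a)) ^ 2 := by
    intro a
    have h := hR a
    simp only [Pi.zero_apply, mul_zero, Finset.sum_const_zero] at h
    have := lin_facts h
    rwa [Real.coe_toNNReal _ (hV a)] at this
  have k1 : ∀ i, MemLp (fun ω => R ω i) 4 P ∧ ∫ ω, R ω i ^ 2 ∂P = V i i ∧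
      ∫ ω, R ω i ^ 4 ∂P = 3 * V i i ^ 2 := by
    intro i
    simpa [Pi.single_apply] using key (Pi.single i 1)
  have kp : ∀ i j, ∫ ω, (R ω i + R ω j) ^ 4 ∂P = 3 * (V i i + 2 * V i j + V j j) ^ 2 := by
    intro i j
    have := (key (Pi.single i 1 + Pi.single j 1)).2.2
    simp [Pi.single_apply, add_mul, Finset.sum_add_distrib, Matrix.mulVec_add,
      add_dotProduct] at this
    rw [this, hsym i j]; ring
  have km : ∀ i j, ∫ ω, (R ω i - R ω j) ^ 4 ∂P = 3 * (V i i - 2 * V i j + V j j) ^ 2 := by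
    intro i j
    have := (key (Pi.single i 1 - Pi.single j 1)).2.2
    simp [Pi.single_apply, sub_mul, Finset.sum_sub_distrib, Matrix.mulVec_sub,
      sub_dotProduct] at this
    rw [this, hsym i j]; ring
  have kc : ∀ i j, Integrable (fun ω => R ω i ^ 2 * R ω j ^ 2) P ∧
      ∫ ω, R ω i ^ 2 * R ω j ^ 2 ∂P = V i i * V j j + 2 * V i j ^ 2 := by
    intro i j
    have := cross (k1 i).1 (k1 j).1
    refine ⟨this.1, ?_⟩
    rw [this.2, kp, km, (k1 i).2.2, (k1 j).2.2]
    ring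
  have e : (fun ω => (∑ i, R ω i ^ 2 - t) ^ 2) = fun ω =>
      (∑ i, ∑ j, R ω i ^ 2 * R ω j ^ 2) - (2 * t) * (∑ i, R ω i ^ 2) + t ^ 2 := by
    funext ω
    rw [← Finset.sum_mul_sum]; ring
  have i1 : Integrable (fun ω => ∑ i, ∑ j, R ω i ^ 2 * R ω j ^ 2) P :=
    integrable_finsetSum _ fun i _ => integrable_finsetSum _ fun j _ => (kc i j).1
  have i2 : Integrable (fun ω => (2 * t) * (∑ i, R ω i ^ 2)) P :=
    (integrable_finsetSum _ fun i _ => int2 (k1 i).1).const_mul _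
  have i12 : Integrable (fun ω => (∑ i, ∑ j, R ω i ^ 2 * R ω j ^ 2)
      - (2 * t) * (∑ i, R ω i ^ 2)) P := i1.sub i2
  refine ⟨by rw [e]; exact (i1.sub i2).add (integrable_const _), ?_⟩
  rw [e, integral_add i12 (integrable_const _), integral_sub i1 i2, integral_const_mul,
    integral_finsetSum _ (fun i _ => int2 (k1 i).1),
    integral_finsetSum _ (fun i _ => integrable_finsetSum _ fun j _ => (kc i j).1)]
  have e2 : ∀ i, ∫ ω, ∑ j, R ω i ^ 2 * R ω j ^ 2 ∂P = ∑ j, (V i i * V j j + 2 * V i j ^ 2) := by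
    intro i
    rw [integral_finsetSum _ (fun j _ => (kc i j).1)]
    exact Finset.sum_congr rfl fun j _ => (kc i j).2
  have e3 : (V * V).trace = ∑ i, ∑ j, V i j ^ 2 := by
    simp only [Matrix.trace, Matrix.diag, Matrix.mul_apply]
    refine Finset.sum_congr rfl fun i _ => Finset.sum_congr rfl fun j _ => ?_
    rw [hsym i j]; ring
  have e4 : V.trace = ∑ i, V i i := rfl
  simp only [e2]
  simp only [(fun i => (k1 i).2.1), Finset.sum_add_distrib, ← Finset.mul_sum,
    ← Finset.sum_mul, ← e3, ← e4]
  simp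
  ring

lemma push {ι κ : Type*} [Fintype ι] [Fintype κ] {Z : Ω → ι → ℝ} {V : Matrix ι ι ℝ}
    (h : IsMvGaussian P Z 0 V) (B : Matrix κ ι ℝ) :
    IsMvGaussian P (fun ω => B *ᵥ Z ω) 0 (B * V * Bᵀ) := by
  intro a
  have := h (a ᵥ* B)
  have e : (fun ω => ∑ i, a i * (B *ᵥ Z ω) i) = fun ω => ∑ i, (a ᵥ* B) i * Z ω i := by
    funext ω
    exact Matrix.dotProduct_mulVec a B (Z ω)
  rw [e, this]
  simp only [Pi.zero_apply, mul_zero, Finset.sum_const_zero]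
  congr 2
  rw [← Matrix.dotProduct_mulVec, ← Matrix.mulVec_mulVec, ← Matrix.mulVec_mulVec,
    Matrix.mulVec_transpose]

end moments

lemma proj_facts (n p : ℕ) (hn : n ≠ 0) (X : Matrix (Fin n) (Fin p) ℝ)
    (hXc : ∀ j, ∑ i, X i j = 0) (hX : IsUnit (Xᵀ * X))
    (H K : Matrix (Fin n) (Fin n) ℝ) (hH : H = X * (Xᵀ * X)⁻¹ * Xᵀ)
    (hK : K = ((n : ℝ))⁻¹ • Matrix.of fun _ _ => (1 : ℝ)) :
    H * X = X ∧ Hᵀ = H ∧ Kᵀ = K ∧ H * H = H ∧ K * K = K ∧ K * H = 0 ∧ H * K = 0 ∧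
      H.trace = p ∧ K.trace = 1 := by
  have hdet := (Matrix.isUnit_iff_isUnit_det _).1 hX
  have a1 : H * X = X := by
    rw [hH, Matrix.mul_assoc, Matrix.mul_assoc, Matrix.nonsing_inv_mul _ hdet, Matrix.mul_one]
  have a2 : Hᵀ = H := by
    rw [hH]
    simp [Matrix.transpose_mul, Matrix.transpose_nonsing_inv, Matrix.mul_assoc]
  have a3 : Kᵀ = K := by
    rw [hK]; ext i j; simp
  have a4 : H * H = H := by
    conv_lhs => rw [hH, ← hH, hH, ← Matrix.mul_assoc, ← Matrix.mul_assoc, ← hH, a1]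
    exact hH.symm
  have hn' : (n : ℝ) ≠ 0 := by exact_mod_cast hn
  have a5 : K * K = K := by
    rw [hK]; ext i j; simp [Matrix.mul_apply, hn']
  have a6 : K * X = 0 := by
    rw [hK]; ext i j
    simp [Matrix.mul_apply, ← Finset.mul_sum, hXc]
  have a7 : K * H = 0 := by
    rw [hH, ← Matrix.mul_assoc, ← Matrix.mul_assoc, a6]; simp
  have a8 : H * K = 0 := by
    have := congrArg Matrix.transpose a7
    rwa [Matrix.transpose_mul, a2, a3, Matrix.transpose_zero] at this
  refine ⟨a1, a2, a3, a4, a5, a7, a8, ?_, ?_⟩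
  · rw [hH, Matrix.trace_mul_comm, ← Matrix.mul_assoc, Matrix.mul_nonsing_inv _ hdet]
    simp
  · rw [hK]; simp [Matrix.trace, hn']

lemma one_n {Ω : Type*} [MeasurableSpace Ω] (P : Measure Ω) [IsProbabilityMeasure P]
    (n p : ℕ) (hn : n ≠ 0) (X : Matrix (Fin n) (Fin p) ℝ)
    (hXc : ∀ j, ∑ i, X i j = 0) (hX : IsUnit (Xᵀ * X)) (β0 : Fin p → ℝ) (σ2 : ℝ) (hσ2 : 0 < σ2)
    (ε : Ω → Fin n → ℝ)
    (hε : IsMvGaussian P ε 0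
      (σ2 • ((1 : Matrix (Fin n) (Fin n) ℝ) - ((n : ℝ))⁻¹ • Matrix.of fun _ _ => (1 : ℝ))))
    (y : Ω → Fin n → ℝ) (hy : ∀ ω, y ω = X *ᵥ β0 + ε ω)
    (βLS : Ω → Fin p → ℝ) (hβLS : ∀ ω, βLS ω = (Xᵀ * X)⁻¹ *ᵥ (Xᵀ *ᵥ y ω)) :
    Integrable (fun ω => ((enorm2 fun i => y ω i - (X *ᵥ βLS ω) i) ^ 2
        - σ2 * ((n : ℝ) - p)) ^ 2) P ∧
    ∫ ω, ((enorm2 fun i => y ω i - (X *ᵥ βLS ω) i) ^ 2 - σ2 * ((n : ℝ) - p)) ^ 2 ∂P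
      = σ2 ^ 2 + 2 * σ2 ^ 2 * ((n : ℝ) - p - 1) := by
  obtain ⟨H, hH⟩ : ∃ H, H = X * (Xᵀ * X)⁻¹ * Xᵀ := ⟨_, rfl⟩
  obtain ⟨K, hK⟩ : ∃ K : Matrix (Fin n) (Fin n) ℝ,
    K = ((n : ℝ))⁻¹ • Matrix.of fun _ _ => (1 : ℝ) := ⟨_, rfl⟩
  obtain ⟨a1, a2, a3, a4, a5, a6, a7, a8, a9⟩ := proj_facts n p hn X hXc hX H K hH hK
  rw [← hK] at hε
  have hres : ∀ ω, (enorm2 fun i => y ω i - (X *ᵥ βLS ω) i) ^ 2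
      = ∑ i, ((1 - H) *ᵥ ε ω) i ^ 2 := by
    intro ω
    unfold enorm2
    rw [Real.sq_sqrt (Finset.sum_nonneg fun i _ => sq_nonneg _)]
    have : y ω - X *ᵥ βLS ω = (1 - H) *ᵥ ε ω := by
      rw [hβLS, Matrix.mulVec_mulVec, Matrix.mulVec_mulVec, ← hH, hy,
        Matrix.mulVec_add, Matrix.mulVec_mulVec, a1, Matrix.sub_mulVec, Matrix.one_mulVec]
      abel
    rw [← this]
    rfl
  obtain ⟨Q, hQ⟩ : ∃ Q, Q = 1 - H - K := ⟨_, rfl⟩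
  have hV : (1 - H) * (σ2 • (1 - K)) * (1 - H)ᵀ = σ2 • Q := by
    rw [Matrix.transpose_sub, Matrix.transpose_one, a2, Matrix.mul_smul, Matrix.smul_mul, hQ]
    congr 1
    simp only [Matrix.sub_mul, Matrix.mul_sub, Matrix.one_mul, Matrix.mul_one, a4, a6, a7]
    simp [a6]
  have hQQ : Q * Q = Q := by
    rw [hQ]
    simp only [Matrix.sub_mul, Matrix.mul_sub, Matrix.one_mul, Matrix.mul_one, a4, a5, a6, a7]
    simp
  have hQt : Qᵀ = Q := by rw [hQ]; simp [a2, a3]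
  have hQtr : Q.trace = (n : ℝ) - p - 1 := by
    rw [hQ]; simp [Matrix.trace_sub, a8, a9]
  have hG := push hε (1 - H)
  rw [hV] at hG
  have := second_moment _ _ hG (fun a => by
    rw [Matrix.smul_mulVec, dotProduct_smul, ← hQQ, ← Matrix.mulVec_mulVec,
      Matrix.dotProduct_mulVec, ← Matrix.mulVec_transpose, hQt, smul_eq_mul]
    exact mul_nonneg hσ2.le (Finset.sum_nonneg fun i _ => mul_self_nonneg _))
    (by rw [Matrix.transpose_smul, hQt]) (σ2 * ((n : ℝ) - p))
  simp only [hres]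
  refine ⟨this.1, this.2.trans ?_⟩
  rw [Matrix.smul_mul, Matrix.mul_smul, hQQ]
  simp only [Matrix.trace_smul, hQtr, smul_eq_mul]
  ring

open MeasureTheory ProbabilityTheory Matrix Filter Asymptotics in
/-- Residual variance consistency (used in the proof of Supplementary Lemma 7):
`|‖y − Xβ̂_LS‖²/(n − p_n) − σ*²| = O_p(n^{-1/2})`. -/
theorem stmt_18
    (Ω : ℕ → Type) [∀ n, MeasurableSpace (Ω n)]
    (P : (n : ℕ) → Measure (Ω n)) [∀ n, IsProbabilityMeasure (P n)]
    (p : ℕ → ℕ)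
    (X : (n : ℕ) → Matrix (Fin n) (Fin (p n)) ℝ)
    (hXc : ∀ n j, ∑ i, X n i j = 0)
    (hXinv : ∀ n, IsUnit ((X n)ᵀ * X n))
    (hp : (fun n => (p n : ℝ)) =o[atTop] fun n => (n : ℝ))
    (β0 : (n : ℕ) → Fin (p n) → ℝ)
    (σ2 : ℝ) (hσ2 : 0 < σ2)
    (ε : (n : ℕ) → Ω n → Fin n → ℝ)
    (hε : ∀ n, IsMvGaussian (P n) (ε n) 0
      (σ2 • ((1 : Matrix (Fin n) (Fin n) ℝ) - ((n : ℝ))⁻¹ • Matrix.of fun _ _ => (1 : ℝ))))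
    (y : (n : ℕ) → Ω n → Fin n → ℝ) (hy : ∀ n ω, y n ω = X n *ᵥ β0 n + ε n ω)
    (βLS : (n : ℕ) → Ω n → Fin (p n) → ℝ)
    (hβLS : ∀ n ω, βLS n ω = ((X n)ᵀ * X n)⁻¹ *ᵥ ((X n)ᵀ *ᵥ y n ω)) :
    IsBigOP P (fun n ω =>
        |(enorm2 fun i => y n ω i - (X n *ᵥ βLS n ω) i) ^ 2 / ((n : ℝ) - (p n : ℝ)) - σ2|)
      fun n => (Real.sqrt (n : ℝ))⁻¹ := by
  intro γ hγ
  obtain ⟨ζ, hζ, hζ2⟩ : ∃ ζ : ℝ, 0 < ζ ∧ 4 * σ2 ^ 2 < γ * ζ ^ 2 := by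
    refine ⟨2 * σ2 / Real.sqrt γ + 1, by positivity, ?_⟩
    have hs : 0 < Real.sqrt γ := Real.sqrt_pos.2 hγ
    have h1 : γ = Real.sqrt γ ^ 2 := (Real.sq_sqrt hγ.le).symm
    have h2 : 4 * σ2 ^ 2 = γ * (2 * σ2 / Real.sqrt γ) ^ 2 := by
      rw [div_pow, ← h1]; field_simp; ring
    rw [h2]
    gcongr
    linarith
  refine ⟨ζ, hζ, ?_⟩
  have hev := hp.def (c := 1 / 2) (by norm_num)
  obtain ⟨N, hN⟩ := eventually_atTop.1 hev
  refine ⟨max N 1, fun n hn => ?_⟩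
  have hpn := hN n (le_trans (le_max_left _ _) hn)
  have hn1 : 1 ≤ n := le_trans (le_max_right _ _) hn
  have hn0 : (0 : ℝ) < n := by exact_mod_cast hn1
  simp only [Real.norm_natCast] at hpn
  obtain ⟨hi, hint⟩ := one_n (P n) n (p n) (by omega) (X n) (hXc n) (hXinv n) (β0 n) σ2 hσ2
    (ε n) (hε n) (y n) (hy n) (βLS n) (hβLS n)
  have hd : 0 < (n : ℝ) - p n := by linarith
  have hmk := mul_meas_ge_le_integral_of_nonneg (ae_of_all _ fun ω => sq_nonneg _) hi
    (ζ ^ 2 * ((n : ℝ) - p n) ^ 2 / n)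
  rw [hint] at hmk
  have hsub : {ω | ζ * (Real.sqrt (n : ℝ))⁻¹ < |(|(enorm2 fun i => y n ω i - (X n *ᵥ βLS n ω) i) ^ 2
        / ((n : ℝ) - (p n : ℝ)) - σ2|)|} ⊆
      {ω | ζ ^ 2 * ((n : ℝ) - p n) ^ 2 / n ≤
        ((enorm2 fun i => y n ω i - (X n *ᵥ βLS n ω) i) ^ 2 - σ2 * ((n : ℝ) - p n)) ^ 2} := by
    intro ω hω
    simp only [Set.mem_ofPred_eq, abs_abs] at hω ⊢
    have h1 := pow_le_pow_left₀ (by positivity) hω.le 2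
    rw [sq_abs, mul_pow, inv_pow, Real.sq_sqrt hn0.le] at h1
    have h2 := mul_le_mul_of_nonneg_right h1 (sq_nonneg ((n : ℝ) - p n))
    rw [← mul_pow, sub_mul, div_mul_cancel₀ _ hd.ne'] at h2
    refine le_trans (le_of_eq ?_) h2
    field_simp
  have hle := measureReal_mono (μ := P n) hsub
  change (P n).real _ < γ
  refine lt_of_le_of_lt hle ?_
  set q := (P n).real {ω | ζ ^ 2 * ((n : ℝ) - p n) ^ 2 / n ≤
        ((enorm2 fun i => y n ω i - (X n *ᵥ βLS n ω) i) ^ 2 - σ2 * ((n : ℝ) - p n)) ^ 2} with hq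
  have hq0 : 0 ≤ q := measureReal_nonneg
  -- ζ² d² / n * q ≤ 2 σ⁴ d
  have h3 : ζ ^ 2 * ((n : ℝ) - p n) ^ 2 / n * q ≤ 2 * σ2 ^ 2 * ((n : ℝ) - p n) := by
    refine hmk.trans ?_
    nlinarith [sq_nonneg σ2]
  have h4 : ζ ^ 2 * (((n : ℝ) - p n) / n) * q ≤ 2 * σ2 ^ 2 := by
    refine le_of_mul_le_mul_right ?_ hd
    refine le_trans (le_of_eq ?_) h3
    ring
  have h5 : (1 : ℝ) / 2 ≤ ((n : ℝ) - p n) / n := by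
    rw [le_div_iff₀ hn0]; linarith
  have h6 : ζ ^ 2 * (1 / 2) * q ≤ ζ ^ 2 * (((n : ℝ) - p n) / n) * q := by gcongr
  have hz : 0 < ζ ^ 2 := by positivity
  refine lt_of_mul_lt_mul_right ?_ hz.le
  linarith
end
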